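/- arXiv:2209.14283 — 13 statements merged into one kernel-verified Lean document; each statement's English description precedes it below -/
import Mathlib

section
/- Let G be a directed acyclic graph on a finite vertex set V partitioned into disjoint nonempty sets 𝐗 and 𝐘, and assume G is unidirectional from 𝐗 to 𝐘. Then every path between two vertices Yk, Yl ∈ 𝐘 that contains at least one vertex of 𝐗 contains a vertex of 𝐗 that is a non-collider on that path; consequently every such path is blocked by any conditioning set containing 𝐗. -/
open MeasureTheory ProbabilityTheory

namespace VecCI

variable {V : Type*}

/-- Undirected adjacency of the edge relation `E`. -/
def Adj (E : V → V → Prop) (u v : V) : Prop := E u v ∨ E v u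

/-- `p` is a path from `a` to `b`: a list of pairwise distinct vertices, starting at `a`,
ending at `b`, with at least two vertices, consecutive vertices being adjacent. -/
def IsPath (E : V → V → Prop) (p : List V) (a b : V) : Prop :=
  p.Nodup ∧ 2 ≤ p.length ∧ p.head? = some a ∧ p.getLast? = some b ∧ p.Chain' (Adj E)

/-- Index `i` is an interior position of the path `p`. -/
def Interior (p : List V) (i : ℕ) : Prop := 0 < i ∧ i + 1 < p.length

/-- The vertex at interior position `i` of `p` is a collider: both adjacent edges point into it. -/
def ColliderAt (E : V → V → Prop) (p : List V) (i : ℕ) : Prop :=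
  Interior p i ∧
    ∃ u v w, p[i - 1]? = some u ∧ p[i]? = some v ∧ p[i + 1]? = some w ∧ E u v ∧ E w v

/-- The vertex at interior position `i` of `p` is a non-collider. -/
def NonColliderAt (E : V → V → Prop) (p : List V) (i : ℕ) : Prop :=
  Interior p i ∧ ¬ ColliderAt E p i

/-- `d` is a descendant of `c`: `d = c` or there is a directed path from `c` to `d`. -/
def Descendant (E : V → V → Prop) (c d : V) : Prop := Relation.ReflTransGen E c d

/-- A set `S` blocks a path `p` if some interior non-collider of `p` lies in `S`, or some
collider of `p` has no descendant in `S`. -/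
def Blocked (E : V → V → Prop) (S : Set V) (p : List V) : Prop :=
  (∃ i v, NonColliderAt E p i ∧ p[i]? = some v ∧ v ∈ S) ∨
  (∃ i v, ColliderAt E p i ∧ p[i]? = some v ∧ ∀ d, Descendant E v d → d ∉ S)

/-- `S` d-separates `a` and `b`: every path between them is blocked by `S`. -/
def DSep (E : V → V → Prop) (S : Set V) (a b : V) : Prop :=
  ∀ p : List V, IsPath E p a b → Blocked E S p

/-- `E` admits no directed cycle. -/
def Acyclic (E : V → V → Prop) : Prop := ∀ v, ¬ Relation.TransGen E v v

/-- `E` has no edge from `Ys` to `Xs`. -/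
def Unidirectional (E : V → V → Prop) (Xs Ys : Set V) : Prop :=
  ∀ x ∈ Xs, ∀ y ∈ Ys, ¬ E y x


/-- in a DAG unidirectional from `Xs` to `Ys`, every path between two
vertices of `Ys` containing a vertex of `Xs` contains a vertex of `Xs` that is a
non-collider on that path; consequently every such path is blocked by any conditioning
set containing `Xs`. -/
theorem stmt_0 {V : Type*} [Fintype V] (E : V → V → Prop) (Xs Ys : Set V)
    (hcover : Xs ∪ Ys = Set.univ) (hdisj : Disjoint Xs Ys)
    (hXne : Xs.Nonempty) (hYne : Ys.Nonempty)
    (hirr : Irreflexive E) (hacyc : Acyclic E)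
    (huni : Unidirectional E Xs Ys)
    (Yk Yl : V) (hYk : Yk ∈ Ys) (hYl : Yl ∈ Ys)
    (p : List V) (hp : IsPath E p Yk Yl) (hthrough : ∃ v ∈ Xs, v ∈ p) :
    (∃ i v, NonColliderAt E p i ∧ p[i]? = some v ∧ v ∈ Xs) ∧
      ∀ S : Set V, Xs ⊆ S → Blocked E S p := by
  classical
  have key : ∃ i v, NonColliderAt E p i ∧ p[i]? = some v ∧ v ∈ Xs := by
    obtain ⟨_, hlen, hhead, hlast, _⟩ := hp
    have hno : ∀ v, v ∈ Xs → v ∈ Ys → False := fun v h1 h2 =>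
      Set.disjoint_left.mp hdisj h1 h2
    have hex : ∃ i : ℕ, ∃ v, p[i]? = some v ∧ v ∈ Xs := by
      obtain ⟨v, hv, hvp⟩ := hthrough
      obtain ⟨i, hi⟩ := List.mem_iff_getElem?.mp hvp
      exact ⟨i, v, hi, hv⟩
    obtain ⟨v, hiv, hvX⟩ := Nat.find_spec hex
    have hmin : ∀ j : ℕ, j < Nat.find hex → ¬ ∃ v, p[j]? = some v ∧ v ∈ Xs :=
      fun j hj => Nat.find_min hex hj
    generalize Nat.find hex = i at hiv hmin
    have hi0 : 0 < i := by
      rcases Nat.eq_zero_or_pos i with h | h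
      · subst h
        rw [List.head?_eq_getElem?, hiv] at hhead
        cases hhead
        exact (hno _ hvX hYk).elim
      · exact h
    have hil : i < p.length := (List.getElem?_eq_some_iff.mp hiv).1
    have hi1 : i + 1 < p.length := by
      by_contra hcon
      have hieq : i = p.length - 1 := by omega
      rw [List.getLast?_eq_getElem?, ← hieq, hiv] at hlast
      cases hlast
      exact hno _ hvX hYl
    refine ⟨i, v, ⟨⟨hi0, hi1⟩, ?_⟩, hiv, hvX⟩
    rintro ⟨_, u, v', w, hu, hv', _, huv, _⟩
    rw [hiv] at hv'
    cases hv'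
    have huX : u ∉ Xs := fun h => hmin (i - 1) (by omega) ⟨u, hu, h⟩
    have huY : u ∈ Ys := by
      have h : u ∈ Xs ∪ Ys := hcover ▸ Set.mem_univ u
      exact h.resolve_left huX
    exact huni v hvX u huY huv
  refine ⟨key, fun S hS => Or.inl ?_⟩
  obtain ⟨i, v, h1, h2, h3⟩ := key
  exact ⟨i, v, h1, h2, hS h3⟩

end VecCI
end

section
/- Let G be a directed acyclic graph on a finite vertex set V partitioned into disjoint nonempty sets 𝐗 and 𝐘, unidirectional from 𝐗 to 𝐘. If Yk, Yl ∈ 𝐘 are distinct and S ⊆ 𝐘 \ {Yk, Yl} d-separates Yk and Yl in G, then S ∪ 𝐗 also d-separates Yk and Yl in G. -/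
open MeasureTheory ProbabilityTheory

namespace VecCI

variable {V : Type*}

/-- if `S ⊆ Ys \ {Yk, Yl}` d-separates `Yk, Yl ∈ Ys`, then `S ∪ Xs`
also d-separates them. -/
theorem stmt_1 {V : Type*} [Fintype V] (E : V → V → Prop) (Xs Ys : Set V)
    (hcover : Xs ∪ Ys = Set.univ) (hdisj : Disjoint Xs Ys)
    (hXne : Xs.Nonempty) (hYne : Ys.Nonempty)
    (hirr : Irreflexive E) (hacyc : Acyclic E)
    (huni : Unidirectional E Xs Ys)
    (Yk Yl : V) (hYk : Yk ∈ Ys) (hYl : Yl ∈ Ys) (hne : Yk ≠ Yl)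
    (S : Set V) (hS : S ⊆ Ys \ {Yk, Yl}) (hsep : DSep E S Yk Yl) :
    DSep E (S ∪ Xs) Yk Yl := by
  intro p hp
  by_cases hx : ∃ i : ℕ, ∃ v, p[i]? = some v ∧ v ∈ Xs
  · classical
    left
    obtain ⟨v, hv, hvX⟩ := Nat.find_spec hx
    have hmin := fun m => Nat.find_min hx (m := m)
    generalize Nat.find hx = i at *
    obtain ⟨hnd, hlen, hhead, hlast, hch⟩ := hp
    have hXY : ∀ z, z ∈ Xs → z ∈ Ys → False := fun z h1 h2 =>
      Set.disjoint_left.mp hdisj h1 h2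
    have hi : i < p.length := by
      by_contra h
      rw [List.getElem?_eq_none (by omega)] at hv
      cases hv
    have hi0 : 0 < i := by
      rcases Nat.eq_zero_or_pos i with h | h
      · subst h
        rw [List.head?_eq_getElem?, hv] at hhead
        cases hhead
        exact (hXY _ hvX hYk).elim
      · exact h
    have hi1 : i + 1 < p.length := by
      by_contra h
      have h2 : p.length - 1 = i := by omega
      rw [List.getLast?_eq_getElem?, h2, hv] at hlast
      cases hlast
      exact hXY _ hvX hYl
    refine ⟨i, v, ⟨⟨hi0, hi1⟩, ?_⟩, hv, Or.inr hvX⟩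
    rintro ⟨-, u, v', w, hu, hv', hw, huv, hwv⟩
    rw [hv] at hv'
    cases hv'
    have huY : u ∈ Ys := by
      have : u ∈ Xs ∪ Ys := by rw [hcover]; trivial
      rcases this with h | h
      · exact (hmin (i - 1) (by omega) ⟨u, hu, h⟩).elim
      · exact h
    exact huni v hvX u huY huv
  · have hY : ∀ z, z ∉ Xs → z ∈ Ys := fun z hz => by
      have : z ∈ Xs ∪ Ys := by rw [hcover]; trivial
      exact this.resolve_left hz
    rcases hsep p hp with ⟨i, v, h1, h2, h3⟩ | ⟨i, v, h1, h2, h3⟩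
    · exact Or.inl ⟨i, v, h1, h2, Or.inl h3⟩
    · refine Or.inr ⟨i, v, h1, h2, fun d hd => ?_⟩
      have hdX : d ∉ Xs := by
        have hd' : Relation.ReflTransGen E v d := hd
        induction hd' with
        | refl => exact fun h => hx ⟨i, v, h2, h⟩
        | tail h1 h2 ih => exact fun h => huni _ h _ (hY _ (ih h1)) h2
      rintro (h | h)
      · exact h3 d hd h
      · exact hdX h

end VecCI
end

section
/- (Lemma 1, principle P1.) Let G be a directed acyclic graph on V = 𝐗 ∪ 𝐘, unidirectional from 𝐗 to 𝐘, and let the joint distribution of random variables (Z_v)_{v ∈ V} be Markov and faithful to G. Then there is no subset S ⊆ 𝐘 and no pair of distinct vertices Yk, Yl ∈ 𝐘 \ S such that Z_{Yk} and Z_{Yl} are conditionally independent given σ((Z_s)_{s ∈ S}) but conditionally dependent given σ((Z_s)_{s ∈ S ∪ 𝐗}). -/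
open MeasureTheory ProbabilityTheory

namespace VecCI

variable {V : Type*}

/-- The σ-algebra generated by the family of random variables `(Z s)_{s ∈ S}`. -/
def sigmaOf {Ω : Type*} (Z : V → Ω → ℝ) (S : Set V) : MeasurableSpace Ω :=
  ⨆ s ∈ S, MeasurableSpace.comap (Z s) inferInstance

/-- `Z a` and `Z b` are conditionally independent given the σ-algebra generated by
`(Z s)_{s ∈ S}` (for `S = ∅` this is conditioning on the trivial σ-algebra, i.e.
unconditional independence). -/
def CondIndepGiven {Ω : Type*} [mΩ : MeasurableSpace Ω] [StandardBorelSpace Ω]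
    (μ : Measure Ω) [IsFiniteMeasure μ] (Z : V → Ω → ℝ) (hZ : ∀ v, Measurable (Z v))
    (S : Set V) (a b : V) : Prop :=
  CondIndepFun (sigmaOf Z S) (iSup₂_le fun s _ => measurable_iff_comap_le.mp (hZ s))
    (Z a) (Z b) μ

/-- The joint distribution of `(Z v)_{v ∈ V}` is Markov and faithful to the graph `E`:
for all distinct `a`, `b` and every `S ⊆ V \ {a, b}`, `S` d-separates `a` and `b` in `E`
iff `Z a` and `Z b` are conditionally independent given `σ((Z s)_{s ∈ S})`. -/
def MarkovFaithful {Ω : Type*} [mΩ : MeasurableSpace Ω] [StandardBorelSpace Ω]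
    (E : V → V → Prop) (μ : Measure Ω) [IsFiniteMeasure μ]
    (Z : V → Ω → ℝ) (hZ : ∀ v, Measurable (Z v)) : Prop :=
  ∀ a b : V, a ≠ b → ∀ S : Set V, a ∉ S → b ∉ S →
    (DSep E S a b ↔ CondIndepGiven μ Z hZ S a b)

/-- Lemma 1, principle P1: under Markov + faithfulness to a DAG
unidirectional from `Xs` to `Ys`, conditioning on the cause group `Xs` cannot create
a new conditional dependence within the effect group `Ys`. -/
theorem stmt_2 {V : Type*} [Fintype V] (E : V → V → Prop) (Xs Ys : Set V)
    (hcover : Xs ∪ Ys = Set.univ) (hdisj : Disjoint Xs Ys)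
    (hXne : Xs.Nonempty) (hYne : Ys.Nonempty)
    (hirr : Irreflexive E) (hacyc : Acyclic E)
    (huni : Unidirectional E Xs Ys)
    {Ω : Type*} [mΩ : MeasurableSpace Ω] [StandardBorelSpace Ω]
    (μ : Measure Ω) [IsProbabilityMeasure μ]
    (Z : V → Ω → ℝ) (hZ : ∀ v, Measurable (Z v))
    (hMF : MarkovFaithful E μ Z hZ) :
    ¬ ∃ (S : Set V) (Yk Yl : V), S ⊆ Ys ∧ Yk ∈ Ys \ S ∧ Yl ∈ Ys \ S ∧ Yk ≠ Yl ∧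
      CondIndepGiven μ Z hZ S Yk Yl ∧ ¬ CondIndepGiven μ Z hZ (S ∪ Xs) Yk Yl := by
  rintro ⟨S, a, b, hS, ⟨haY, haS⟩, ⟨hbY, hbS⟩, hab, hci, hnci⟩
  have hXY : ∀ v, v ∈ Xs → v ∈ Ys → False := fun v h1 h2 =>
    Set.disjoint_left.mp hdisj h1 h2
  have hor : ∀ v, v ∈ Xs ∨ v ∈ Ys := fun v => by
    have : v ∈ Xs ∪ Ys := by rw [hcover]; trivial
    exact this
  have hd := (hMF a b hab S haS hbS).2 hci
  apply hnci
  refine (hMF a b hab (S ∪ Xs) ?_ ?_).1 ?_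
  · rintro (h | h)
    · exact haS h
    · exact hXY a h haY
  · rintro (h | h)
    · exact hbS h
    · exact hXY b h hbY
  intro p hp
  by_contra hnb
  have hpath := hp
  obtain ⟨-, hlen, hhead, hlast, -⟩ := hp
  have hdesc : ∀ c d, Descendant E c d → c ∈ Ys → d ∈ Ys := by
    intro c d h hc
    induction h with
    | refl => exact hc
    | tail _ he ih =>
      rename_i x y _
      rcases hor y with hy | hy
      · exact absurd he (huni y hy x ih)
      · exact hy
  have hall : ∀ (i : ℕ) (v : V), p[i]? = some v → v ∈ Ys := by
    intro i
    induction i with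
    | zero =>
      intro v hv
      rw [List.head?_eq_getElem?, hv] at hhead
      cases hhead
      exact haY
    | succ i ih =>
      intro v hv
      rcases hor v with hvX | hvY
      · exfalso
        obtain ⟨hi, -⟩ := List.getElem?_eq_some_iff.1 hv
        by_cases hi2 : i + 1 + 1 < p.length
        · apply hnb
          refine Or.inl ⟨i + 1, v, ⟨⟨Nat.succ_pos i, hi2⟩, ?_⟩, hv, Or.inr hvX⟩
          rintro ⟨-, u, v', w, hu, hv', -, huv, -⟩
          rw [hv] at hv'
          cases hv'
          exact huni v hvX u (ih u hu) huv
        · have : p.length - 1 = i + 1 := by omega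
          rw [List.getLast?_eq_getElem?, this, hv] at hlast
          cases hlast
          exact hXY _ hvX hbY
      · exact hvY
  rcases hd p hpath with ⟨i, v, h1, h2, h3⟩ | ⟨i, v, h1, h2, h3⟩
  · exact hnb (Or.inl ⟨i, v, h1, h2, Or.inl h3⟩)
  · refine hnb (Or.inr ⟨i, v, h1, h2, fun d hvd => ?_⟩)
    rintro (h | h)
    · exact h3 d hvd h
    · exact hXY d h (hdesc v d hvd (hall i v h2))

end VecCI
end

section
/- Let G be a directed acyclic graph on a finite vertex set V partitioned into disjoint nonempty sets 𝐗 and 𝐘, unidirectional from 𝐗 to 𝐘. Then every descendant of a vertex of 𝐘 lies in 𝐘, every path between two vertices Xi, Xj ∈ 𝐗 that contains a vertex of 𝐘 contains a collider lying in 𝐘, and consequently every such path is blocked by every conditioning set S ⊆ 𝐗 \ {Xi, Xj}. -/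
open MeasureTheory ProbabilityTheory

namespace VecCI

variable {V : Type*}

/-- From a vertex of `Ys` entered by an edge along the path, walking on along the path one meets
a collider in `Ys` before reaching the final vertex of `Xs`. -/
theorem exists_collider_of_entry {V : Type*} (E : V → V → Prop) (Ys : Set V)
    (hstep : ∀ a b, a ∈ Ys → E a b → b ∈ Ys) (p : List V)
    (hadj : ∀ i (h : i + 1 < p.length), Adj E p[i] p[i + 1])
    (hlast : ∀ (h : p.length - 1 < p.length), p[p.length - 1] ∉ Ys) :
    ∀ n i, p.length - i = n → ∀ (h : i + 1 < p.length), p[i + 1] ∈ Ys → E p[i] p[i + 1] →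
      ∃ i v, ColliderAt E p i ∧ p[i]? = some v ∧ v ∈ Ys := by
  intro n
  induction n with
  | zero => intro i hi h; omega
  | succ n ih =>
    intro i hi h hY hE
    have h2 : i + 1 + 1 < p.length := by
      by_contra hc
      have hl : p.length - 1 = i + 1 := by omega
      have := hlast (by omega)
      simp only [hl] at this
      exact this hY
    rcases hadj (i + 1) h2 with h3 | h3
    · exact ih (i + 1) (by omega) h2 (hstep _ _ hY h3) h3
    · exact ⟨i + 1, p[i + 1], ⟨⟨by omega, h2⟩, p[i], p[i + 1], p[i + 1 + 1],
        by simp, by simp, by simp, hE, h3⟩, by simp, hY⟩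

/-- in a DAG unidirectional from `Xs` to `Ys`, every descendant of a
vertex of `Ys` lies in `Ys`; every path between two vertices of `Xs` containing a
vertex of `Ys` contains a collider lying in `Ys`, and consequently every such path is
blocked by every conditioning set `S ⊆ Xs \ {Xi, Xj}`. -/
theorem stmt_3 {V : Type*} [Fintype V] (E : V → V → Prop) (Xs Ys : Set V)
    (hcover : Xs ∪ Ys = Set.univ) (hdisj : Disjoint Xs Ys)
    (hXne : Xs.Nonempty) (hYne : Ys.Nonempty)
    (hirr : Irreflexive E) (hacyc : Acyclic E)
    (huni : Unidirectional E Xs Ys) :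
    (∀ y ∈ Ys, ∀ d, Descendant E y d → d ∈ Ys) ∧
    ∀ Xi Xj : V, Xi ∈ Xs → Xj ∈ Xs →
      ∀ p : List V, IsPath E p Xi Xj → (∃ v ∈ Ys, v ∈ p) →
        (∃ i v, ColliderAt E p i ∧ p[i]? = some v ∧ v ∈ Ys) ∧
        ∀ S : Set V, S ⊆ Xs \ {Xi, Xj} → Blocked E S p := by
  have hX : ∀ a, a ∈ Xs → a ∉ Ys := fun a ha hb => Set.disjoint_left.mp hdisj ha hb
  have hXY : ∀ a, a ∉ Ys → a ∈ Xs := by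
    intro a ha
    have : a ∈ Xs ∪ Ys := by rw [hcover]; trivial
    exact this.resolve_right ha
  have hstep : ∀ a b, a ∈ Ys → E a b → b ∈ Ys := by
    intro a b ha hab
    by_contra hb
    exact huni b (hXY b hb) a ha hab
  have hdesc : ∀ y ∈ Ys, ∀ d, Descendant E y d → d ∈ Ys := by
    intro y hy d hd
    unfold Descendant at hd
    induction hd with
    | refl => exact hy
    | tail _ hbc ih => exact hstep _ _ ih hbc
  refine ⟨hdesc, ?_⟩
  intro Xi Xj hXi hXj p hp hv
  obtain ⟨_, hlen, hhead, hlast, hchain⟩ := hp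
  have hadj : ∀ i (h : i + 1 < p.length), Adj E p[i] p[i + 1] := by
    intro i h
    exact List.isChain_iff_getElem.mp hchain i h
  have hcol : ∃ i v, ColliderAt E p i ∧ p[i]? = some v ∧ v ∈ Ys := by
    classical
    have hex : ∃ k, ∃ h : k < p.length, p[k] ∈ Ys := by
      obtain ⟨v, hvY, hvp⟩ := hv
      obtain ⟨k, hk, rfl⟩ := List.getElem_of_mem hvp
      exact ⟨k, hk, hvY⟩
    obtain ⟨hk, hkY⟩ := Nat.find_spec hex
    have hmin := fun m => @Nat.find_min _ _ hex m
    generalize Nat.find hex = k at hk hkY hmin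
    cases k with
    | zero =>
      rw [List.head?_eq_getElem?, List.getElem?_eq_getElem hk] at hhead
      have := Option.some.inj hhead
      exact absurd hkY (this ▸ hX _ hXi)
    | succ k =>
      have hkn : p[k] ∉ Ys := fun hc => hmin k (by omega) ⟨by omega, hc⟩
      have hE : E p[k] p[k + 1] := by
        rcases hadj k hk with h | h
        · exact h
        · exact absurd (hstep _ _ hkY h) hkn
      refine exists_collider_of_entry E Ys hstep p hadj ?_ _ k rfl hk hkY hE
      intro h
      rw [List.getLast?_eq_getElem?, List.getElem?_eq_getElem h] at hlast
      have := Option.some.inj hlast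
      exact this ▸ hX _ hXj
  refine ⟨hcol, ?_⟩
  intro S hS
  obtain ⟨i, v, hc, hi, hvY⟩ := hcol
  exact Or.inr ⟨i, v, hc, hi, fun d hd hdS => hX d (hS hdS).1 (hdesc v hvY d hd)⟩

end VecCI
end

section
/- Let G be a directed acyclic graph on a finite vertex set V partitioned into disjoint nonempty sets 𝐗 and 𝐘, unidirectional from 𝐗 to 𝐘. Let Xi, Xj ∈ 𝐗 be distinct and S ⊆ 𝐗 \ {Xi, Xj}. If S ∪ 𝐘 d-separates Xi and Xj in G, then S d-separates Xi and Xj in G. Equivalently, if S does not d-separate Xi and Xj, then S ∪ 𝐘 does not d-separate Xi and Xj. -/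
open MeasureTheory ProbabilityTheory

namespace VecCI

variable {V : Type*}

/-- for distinct `Xi, Xj ∈ Xs` and `S ⊆ Xs \ {Xi, Xj}`, if `S ∪ Ys`
d-separates `Xi` and `Xj`, then `S` d-separates them. -/
theorem stmt_4 {V : Type*} [Fintype V] (E : V → V → Prop) (Xs Ys : Set V)
    (hcover : Xs ∪ Ys = Set.univ) (hdisj : Disjoint Xs Ys)
    (hXne : Xs.Nonempty) (hYne : Ys.Nonempty)
    (hirr : Irreflexive E) (hacyc : Acyclic E)
    (huni : Unidirectional E Xs Ys)
    (Xi Xj : V) (hXi : Xi ∈ Xs) (hXj : Xj ∈ Xs) (hne : Xi ≠ Xj)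
    (S : Set V) (hS : S ⊆ Xs \ {Xi, Xj})
    (hsep : DSep E (S ∪ Ys) Xi Xj) :
    DSep E S Xi Xj := by
  intro p hp
  by_contra hb
  have hX : ∀ v, v ∉ Ys → v ∈ Xs := by
    intro v hv
    have h : v ∈ Xs ∪ Ys := by rw [hcover]; trivial
    exact h.resolve_right hv
  have hYE : ∀ u v, u ∈ Ys → E u v → v ∈ Ys := by
    intro u v hu huv
    by_contra hv
    exact huni v (hX v hv) u hu huv
  have hYD : ∀ u v, u ∈ Ys → Descendant E u v → v ∈ Ys := by
    intro u v hu huv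
    induction huv with
    | refl => exact hu
    | tail _ h ih => exact hYE _ _ ih h
  have hSY : ∀ v, v ∈ Ys → v ∉ S := fun v hv hs =>
    Set.disjoint_left.mp hdisj (hS hs).1 hv
  obtain ⟨hnd, hlen, hhead, hlast, hch⟩ := id hp
  have hadj : ∀ k (h : k + 1 < p.length), Adj E p[k] p[k+1] := by
    intro k h
    exact List.isChain_iff_getElem.mp hch k h
  have hncol : ∀ k (h : k + 2 < p.length), p[k+1] ∈ Ys → E p[k] p[k+1] →
      ¬ E p[k+2] p[k+1] := by
    intro k h hy h1 h2
    apply hb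
    right
    refine ⟨k+1, p[k+1], ⟨⟨by omega, by omega⟩, p[k], p[k+1], p[k+2], ?_, ?_, ?_, h1, h2⟩, ?_, ?_⟩
    · simp
    · simp
    · simp
    · simp
    · intro d hd
      exact hSY d (hYD _ _ hy hd)
  have h0 : p[0] = Xi := by
    rw [List.head?_eq_getElem?, List.getElem?_eq_getElem (by omega)] at hhead
    exact Option.some.inj hhead
  have hl : p[p.length - 1] = Xj := by
    rw [List.getLast?_eq_getElem?, List.getElem?_eq_getElem (by omega)] at hlast
    exact Option.some.inj hlast
  have hnY : ∀ x, x ∈ Xs → x ∉ Ys := fun x hx hy => Set.disjoint_left.mp hdisj hx hy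
  have hQ : ∀ k (h : k + 1 < p.length), p[k+1] ∈ Ys → E p[k] p[k+1] := by
    intro k
    induction k with
    | zero =>
      intro h hy
      rcases hadj 0 h with h1 | h1
      · exact h1
      · exact absurd (hYE _ _ hy h1) (by rw [h0]; exact hnY _ hXi)
    | succ k ih =>
      intro h hy
      rcases hadj (k+1) h with h1 | h1
      · exact h1
      · have hy' := hYE _ _ hy h1
        exact absurd h1 (hncol k h hy' (ih (by omega) hy'))
  have hstep : ∀ k (h : k + 2 < p.length), p[k+1] ∈ Ys → p[k+2] ∈ Ys := by
    intro k h hy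
    rcases hadj (k+1) h with h1 | h1
    · exact hYE _ _ hy h1
    · exact absurd h1 (hncol k h hy (hQ k (by omega) hy))
  have hall : ∀ m k (h : k + 1 + m < p.length), p[k+1] ∈ Ys → p[k+1+m] ∈ Ys := by
    intro m
    induction m with
    | zero => intro k h hy; exact hy
    | succ m ih =>
      intro k h hy
      have h3 := ih k (by omega) hy
      have e1 : k + 1 + m = (k + m) + 1 := by omega
      have e2 : k + 1 + (m + 1) = (k + m) + 2 := by omega
      simp only [e1] at h3
      simp only [e2]
      exact hstep (k+m) (by omega) h3
  rcases hsep p hp with ⟨i, v, hn, hv, hvS | hvY⟩ | ⟨i, v, hc, hv, hd⟩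
  · exact hb (Or.inl ⟨i, v, hn, hv, hvS⟩)
  · obtain ⟨⟨hi, hi'⟩, _⟩ := hn
    obtain ⟨k, rfl⟩ : ∃ k, i = k + 1 := ⟨i - 1, by omega⟩
    rw [List.getElem?_eq_getElem (by omega)] at hv
    have hv' := Option.some.inj hv
    have h4 := hall (p.length - 1 - (k + 1)) k (by omega) (by rw [hv']; exact hvY)
    have e : k + 1 + (p.length - 1 - (k + 1)) = p.length - 1 := by omega
    simp only [e, hl] at h4
    exact hnY _ hXj h4
  · exact hb (Or.inr ⟨i, v, hc, hv, fun d h hs => hd d h (Or.inl hs)⟩)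

end VecCI
end

section
/- (Lemma 2, principle P2.) Let G be a directed acyclic graph on V = 𝐗 ∪ 𝐘, unidirectional from 𝐗 to 𝐘, and let the joint distribution of random variables (Z_v)_{v ∈ V} be Markov and faithful to G. Then there is no subset S ⊆ 𝐗 and no pair of distinct vertices Xi, Xj ∈ 𝐗 \ S such that Z_{Xi} and Z_{Xj} are conditionally dependent given σ((Z_s)_{s ∈ S}) but conditionally independent given σ((Z_s)_{s ∈ S ∪ 𝐘}). -/
open MeasureTheory ProbabilityTheory

namespace VecCI

variable {V : Type*}

/-- A path which is active given a subset of `Xs` stays active when `Ys` is added. -/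
theorem active_avoids {V : Type*} (E : V → V → Prop) (Xs Ys : Set V)
    (hcover : Xs ∪ Ys = Set.univ) (hdisj : Disjoint Xs Ys)
    (huni : Unidirectional E Xs Ys) (S : Set V) (hS : S ⊆ Xs) (a b : V)
    (ha : a ∈ Xs) (hb : b ∈ Xs) (p : List V) (hp : IsPath E p a b)
    (hact : ¬ Blocked E S p) : ¬ Blocked E (S ∪ Ys) p := by
  obtain ⟨-, hlen, hhead, hlast, hchain⟩ := hp
  have hXY : ∀ v, v ∈ Xs → v ∉ Ys := fun v hx hy => Set.disjoint_left.mp hdisj hx hy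
  have hstep : ∀ u v, u ∈ Ys → E u v → v ∈ Ys := by
    intro u v hu huv
    have hv : v ∈ Xs ∪ Ys := by rw [hcover]; trivial
    rcases hv with hv | hv
    · exact absurd huv (huni v hv u hu)
    · exact hv
  have hdesc : ∀ u v, u ∈ Ys → Descendant E u v → v ∈ Ys := by
    intro u v hu huv
    induction huv with
    | refl => exact hu
    | tail _ h ih => exact hstep _ _ ih h
  have hadj : ∀ i (h : i + 1 < p.length), Adj E p[i] p[i + 1] := by
    intro i h
    exact List.isChain_iff_getElem.mp hchain i h
  have hfirst : p[0]'(by omega) = a := by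
    rw [List.head?_eq_getElem?, List.getElem?_eq_getElem (by omega)] at hhead
    exact Option.some.inj hhead
  have hend : p[p.length - 1]'(by omega) = b := by
    rw [List.getLast?_eq_getElem?, List.getElem?_eq_getElem (by omega)] at hlast
    exact Option.some.inj hlast
  -- vertices of `Ys` are never colliders on an active path
  have hnc : ∀ i (h : i + 2 < p.length), p[i + 1] ∈ Ys → E p[i] p[i + 1] →
      E p[i + 2] p[i + 1] → False := by
    intro i h hy h1 h2
    apply hact
    right
    refine ⟨i + 1, p[i + 1], ⟨⟨by omega, by omega⟩, p[i], p[i + 1], p[i + 2], ?_, ?_, ?_, h1, h2⟩,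
      ?_, ?_⟩
    · simp
    · simp
    · exact List.getElem?_eq_getElem h
    · simp
    · intro d hd hdS
      exact hXY d (hS hdS) (hdesc _ _ hy hd)
  have hright : ∀ n i (h : i + 1 < p.length), p.length = i + 2 + n → p[i] ∈ Ys →
      E p[i] p[i + 1] → False := by
    intro n
    induction n with
    | zero =>
      intro i h hn hy he
      have h1 := hstep _ _ hy he
      have h2 : p[i + 1] = b := by
        rw [← hend]; congr 1; omega
      rw [h2] at h1
      exact hXY b hb h1
    | succ n ih =>
      intro i h hn hy he
      have h1 := hstep _ _ hy he
      rcases hadj (i + 1) (by omega) with h2 | h2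
      · exact ih (i + 1) (by omega) (by omega) h1 h2
      · exact hnc i (by omega) h1 he h2
  have hleft : ∀ i (h : i + 1 < p.length), p[i + 1] ∈ Ys → E p[i + 1] p[i] → False := by
    intro i
    induction i with
    | zero =>
      intro h hy he
      have h1 := hstep _ _ hy he
      rw [hfirst] at h1
      exact hXY a ha h1
    | succ i ih =>
      intro h hy he
      have h1 := hstep _ _ hy he
      rcases hadj i (by omega) with h2 | h2
      · exact hnc i (by omega) h1 h2 he
      · exact ih (by omega) h1 h2
  rintro (⟨i, v, hi, hv, hvS⟩ | ⟨i, v, hi, hv, hd⟩)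
  · rcases hvS with hvS | hvY
    · exact hact (Or.inl ⟨i, v, hi, hv, hvS⟩)
    · obtain ⟨⟨h0, h1⟩, hncol⟩ := hi
      obtain ⟨j, rfl⟩ : ∃ j, i = j + 1 := ⟨i - 1, by omega⟩
      have hv' : p[j + 1] = v := by
        rw [List.getElem?_eq_getElem (by omega)] at hv
        exact Option.some.inj hv
      subst hv'
      rcases hadj j (by omega) with h2 | h2
      · rcases hadj (j + 1) h1 with h3 | h3
        · exact hright (p.length - (j + 1 + 2)) (j + 1) h1 (by omega) hvY h3
        · exact hnc j h1 hvY h2 h3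
      · exact hleft j (by omega) hvY h2
  · exact hact (Or.inr ⟨i, v, hi, hv, fun d h hdS => hd d h (Or.inl hdS)⟩)

/-- Lemma 2, principle P2: under Markov + faithfulness to a DAG
unidirectional from `Xs` to `Ys`, conditioning on the effect group `Ys` cannot delete
a conditional dependence within the cause group `Xs`. -/
theorem stmt_5 {V : Type*} [Fintype V] (E : V → V → Prop) (Xs Ys : Set V)
    (hcover : Xs ∪ Ys = Set.univ) (hdisj : Disjoint Xs Ys)
    (hXne : Xs.Nonempty) (hYne : Ys.Nonempty)
    (hirr : Irreflexive E) (hacyc : Acyclic E)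
    (huni : Unidirectional E Xs Ys)
    {Ω : Type*} [mΩ : MeasurableSpace Ω] [StandardBorelSpace Ω]
    (μ : Measure Ω) [IsProbabilityMeasure μ]
    (Z : V → Ω → ℝ) (hZ : ∀ v, Measurable (Z v))
    (hMF : MarkovFaithful E μ Z hZ) :
    ¬ ∃ (S : Set V) (Xi Xj : V), S ⊆ Xs ∧ Xi ∈ Xs \ S ∧ Xj ∈ Xs \ S ∧ Xi ≠ Xj ∧
      ¬ CondIndepGiven μ Z hZ S Xi Xj ∧ CondIndepGiven μ Z hZ (S ∪ Ys) Xi Xj := by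
  rintro ⟨S, Xi, Xj, hS, ⟨hi, hiS⟩, ⟨hj, hjS⟩, hne, hdep, hind⟩
  apply hdep
  have hXY : ∀ v, v ∈ Xs → v ∉ Ys := fun v hx hy => Set.disjoint_left.mp hdisj hx hy
  rw [← hMF Xi Xj hne S hiS hjS]
  rw [← hMF Xi Xj hne (S ∪ Ys) (fun h => h.elim hiS (hXY _ hi))
    (fun h => h.elim hjS (hXY _ hj))] at hind
  intro p hp
  by_contra hact
  exact active_avoids E Xs Ys hcover hdisj huni S hS Xi Xj hi hj p hp hact (hind p hp)

end VecCI
end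

section
/- (Corollary 1: identifiability under Condition (C1).) Let G be a directed acyclic graph on V = 𝐗 ∪ 𝐘, unidirectional from 𝐗 to 𝐘, and let the joint distribution of random variables (Z_v)_{v ∈ V} be Markov and faithful to G. Assume Condition (C1): there exist distinct Xi, Xj ∈ 𝐗 and S ⊆ 𝐗 \ {Xi, Xj} such that Z_{Xi} and Z_{Xj} are conditionally independent given σ((Z_s)_{s ∈ S}) but conditionally dependent given σ((Z_s)_{s ∈ S ∪ 𝐘}). Then there exists no directed acyclic graph G' on V containing no edge (x, y) with x ∈ 𝐗 and y ∈ 𝐘 (i.e. unidirectional from 𝐘 to 𝐗) to which the joint distribution of (Z_v)_{v ∈ V} is Markov and faithful; hence the causal direction 𝐗 → 𝐘 is identifiable from the observational distribution. -/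
open MeasureTheory ProbabilityTheory

namespace VecCI

variable {V : Type*}

/-- Corollary 1, identifiability under (C1): if conditioning on `Ys`
creates a dependence between two vertices of `Xs`, then the observational distribution
is Markov and faithful to no DAG that is unidirectional from `Ys` to `Xs`; hence the
causal direction `Xs → Ys` is identifiable. -/
theorem stmt_6 {V : Type*} [Fintype V] (E : V → V → Prop) (Xs Ys : Set V)
    (hcover : Xs ∪ Ys = Set.univ) (hdisj : Disjoint Xs Ys)
    (hXne : Xs.Nonempty) (hYne : Ys.Nonempty)
    (hirr : Irreflexive E) (hacyc : Acyclic E)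
    (huni : Unidirectional E Xs Ys)
    {Ω : Type*} [mΩ : MeasurableSpace Ω] [StandardBorelSpace Ω]
    (μ : Measure Ω) [IsProbabilityMeasure μ]
    (Z : V → Ω → ℝ) (hZ : ∀ v, Measurable (Z v))
    (hMF : MarkovFaithful E μ Z hZ)
    (Xi Xj : V) (hXi : Xi ∈ Xs) (hXj : Xj ∈ Xs) (hne : Xi ≠ Xj)
    (S : Set V) (hS : S ⊆ Xs \ {Xi, Xj})
    (hci : CondIndepGiven μ Z hZ S Xi Xj)
    (hcd : ¬ CondIndepGiven μ Z hZ (S ∪ Ys) Xi Xj) :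
    ¬ ∃ E' : V → V → Prop, Irreflexive E' ∧ Acyclic E' ∧
      (∀ x ∈ Xs, ∀ y ∈ Ys, ¬ E' x y) ∧ MarkovFaithful E' μ Z hZ := by
  rintro ⟨E', _, hac, hu, hMF'⟩
  have hXS : Xi ∉ S := fun h => (hS h).2 (by simp)
  have hXS' : Xj ∉ S := fun h => (hS h).2 (by simp)
  have hXY : ∀ v, v ∈ Xs → v ∉ Ys := fun v h h' => Set.disjoint_left.mp hdisj h h'
  have hYX : ∀ v, v ∉ Xs → v ∈ Ys := fun v h => by
    have : v ∈ Xs ∪ Ys := hcover ▸ Set.mem_univ v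
    exact this.resolve_left h
  have hdX : ∀ v d, v ∈ Xs → Relation.ReflTransGen E' v d → d ∈ Xs := by
    intro v d hv h
    induction h with
    | refl => exact hv
    | tail _ h2 ih => exact by_contra fun hn => hu _ ih _ (hYX _ hn) h2
  have hsep : DSep E' S Xi Xj := (hMF' Xi Xj hne S hXS hXS').mpr hci
  apply hcd
  refine (hMF' Xi Xj hne (S ∪ Ys) ?_ ?_).mp ?_
  · rintro (h | h)
    exacts [hXS h, hXY _ hXi h]
  · rintro (h | h)
    exacts [hXS' h, hXY _ hXj h]
  intro p hp
  rcases hsep p hp with ⟨i, v, h1, h2, h3⟩ | ⟨i, v, h1, h2, h3⟩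
  · exact Or.inl ⟨i, v, h1, h2, Or.inl h3⟩
  by_cases hvX : v ∈ Xs
  · refine Or.inr ⟨i, v, h1, h2, ?_⟩
    rintro d hd (h | h)
    exacts [h3 d hd h, hXY _ (hdX v d hvX hd) h]
  have hvY := hYX v hvX
  obtain ⟨⟨hi0, hi1⟩, u, v', w, hpu, hpv, hpw, huv, hwv⟩ := h1
  obtain rfl : v = v' := by
    rw [h2] at hpv
    exact Option.some.inj hpv
  have huY : u ∈ Ys := hYX u fun h => hu u h v hvY huv
  have hi : 0 < i - 1 := by
    rcases Nat.eq_zero_or_pos (i - 1) with h0 | h0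
    · exfalso
      have hh := hp.2.2.1
      rw [List.head?_eq_getElem?] at hh
      rw [h0, hh] at hpu
      exact hXY Xi hXi (Option.some.inj hpu ▸ huY)
    · exact h0
  refine Or.inl ⟨i - 1, u, ⟨⟨hi, by omega⟩, ?_⟩, hpu, Or.inr huY⟩
  rintro ⟨_, a, b, c, _, hb, hc, _, hcb⟩
  rw [show i - 1 + 1 = i by omega, h2] at hc
  rw [hpu] at hb
  cases hb
  cases hc
  exact hac u ((Relation.TransGen.single huv).tail hcb)

end VecCI
end

section
/- (Corollary 2: identifiability under Condition (C2).) Let G be a directed acyclic graph on V = 𝐗 ∪ 𝐘, unidirectional from 𝐗 to 𝐘, and let the joint distribution of random variables (Z_v)_{v ∈ V} be Markov and faithful to G. Assume Condition (C2): there exist distinct Yk, Yl ∈ 𝐘 and S ⊆ 𝐘 \ {Yk, Yl} such that Z_{Yk} and Z_{Yl} are conditionally dependent given σ((Z_s)_{s ∈ S}) but conditionally independent given σ((Z_s)_{s ∈ S ∪ 𝐗}). Then there exists no directed acyclic graph G' on V containing no edge (x, y) with x ∈ 𝐗 and y ∈ 𝐘 (i.e. unidirectional from 𝐘 to 𝐗)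 to which the joint distribution of (Z_v)_{v ∈ V} is Markov and faithful; hence the causal direction 𝐗 → 𝐘 is identifiable from the observational distribution. -/
open MeasureTheory ProbabilityTheory

namespace VecCI

variable {V : Type*}

/-- A path between vertices of `Ys` that meets the sink set `Xs` has a collider in `Xs`. -/
theorem exists_collider_mem {V : Type*} (E : V → V → Prop) (Xs Ys : Set V)
    (hcover : Xs ∪ Ys = Set.univ) (hdisj : Disjoint Xs Ys)
    (hE : ∀ x ∈ Xs, ∀ y ∈ Ys, ¬ E x y) (p : List V) (a b : V) (ha : a ∈ Ys) (hb : b ∈ Ys)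
    (hp : IsPath E p a b) (i : ℕ) (v : V) (hi : p[i]? = some v) (hv : v ∈ Xs) :
    ∃ j w, ColliderAt E p j ∧ p[j]? = some w ∧ w ∈ Xs := by
  classical
  obtain ⟨-, -, hhead, hlast, hch⟩ := hp
  have hXY : ∀ w, w ∉ Xs → w ∈ Ys := fun w hw => by
    have : w ∈ Xs ∪ Ys := hcover ▸ Set.mem_univ w
    exact this.resolve_left hw
  have hnot : ∀ w, w ∈ Xs → w ∉ Ys := fun w h1 h2 => Set.disjoint_left.mp hdisj h1 h2
  have hadj : ∀ (k : ℕ) (h : k + 1 < p.length), Adj E p[k] p[k + 1] :=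
    fun k h => List.isChain_iff_getElem.mp hch k h
  have h0 : ∀ h : 0 < p.length, p[0] = a := by
    intro h
    rw [List.head?_eq_getElem?, List.getElem?_eq_getElem h] at hhead
    exact Option.some.inj hhead
  have hl : ∀ h : p.length - 1 < p.length, p[p.length - 1] = b := by
    intro h
    rw [List.getLast?_eq_getElem?, List.getElem?_eq_getElem h] at hlast
    exact Option.some.inj hlast
  have hex : ∃ k, ∃ h : k < p.length, p[k] ∈ Xs := by
    obtain ⟨h, rfl⟩ := List.getElem?_eq_some_iff.mp hi
    exact ⟨i, h, hv⟩
  let P : ℕ → Prop := fun k => ∃ h : k + 1 < p.length, p[k + 1] ∈ Xs ∧ E p[k] p[k + 1]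
  have hPex : ∃ k, P k := by
    obtain ⟨hlt, hmem⟩ := Nat.find_spec hex
    have hmin := fun m (hm : m < Nat.find hex) => Nat.find_min hex hm
    generalize Nat.find hex = n at hlt hmem hmin
    cases n with
    | zero => exact absurd (h0 hlt ▸ ha) (hnot _ hmem)
    | succ k =>
      have hk : p[k] ∉ Xs := fun hx => hmin k (Nat.lt_succ_self k) ⟨by omega, hx⟩
      refine ⟨k, hlt, hmem, ?_⟩
      rcases hadj k hlt with h | h
      · exact h
      · exact absurd h (hE _ hmem _ (hXY _ hk))
  obtain ⟨k0, hk0⟩ := hPex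
  have hspec : P (Nat.findGreatest P p.length) :=
    Nat.findGreatest_spec (P := P) (n := p.length) (by obtain ⟨h, -⟩ := hk0; omega) hk0
  have hmax : ∀ m, Nat.findGreatest P p.length < m → m ≤ p.length → ¬ P m :=
    fun m h1 h2 => Nat.findGreatest_is_greatest h1 h2
  generalize Nat.findGreatest P p.length = k at hspec hmax
  obtain ⟨hlt, hmem, hedge⟩ := hspec
  have hlt2 : k + 1 + 1 < p.length := by
    by_contra hcon
    have hkl : k + 1 = p.length - 1 := by omega
    have := hl (by omega)
    simp only [← hkl] at this
    exact hnot _ hmem (this ▸ hb)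
  have hback : E p[k + 1 + 1] p[k + 1] := by
    rcases hadj (k + 1) hlt2 with h | h
    · by_cases hx : p[k + 1 + 1] ∈ Xs
      · exact absurd ⟨hlt2, hx, h⟩ (hmax (k + 1) (Nat.lt_succ_self k) (by omega))
      · exact absurd h (hE _ hmem _ (hXY _ hx))
    · exact h
  refine ⟨k + 1, p[k + 1], ⟨⟨by omega, hlt2⟩, p[k], p[k + 1], p[k + 1 + 1], ?_, ?_, ?_, hedge,
    hback⟩, ?_, hmem⟩
  · simp
  · simp
  · simp
  · simp

/-- Corollary 2, identifiability under (C2): if conditioning on `Xs`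
deletes a dependence between two vertices of `Ys`, then the observational distribution
is Markov and faithful to no DAG that is unidirectional from `Ys` to `Xs`; hence the
causal direction `Xs → Ys` is identifiable. -/
theorem stmt_7 {V : Type*} [Fintype V] (E : V → V → Prop) (Xs Ys : Set V)
    (hcover : Xs ∪ Ys = Set.univ) (hdisj : Disjoint Xs Ys)
    (hXne : Xs.Nonempty) (hYne : Ys.Nonempty)
    (hirr : Irreflexive E) (hacyc : Acyclic E)
    (huni : Unidirectional E Xs Ys)
    {Ω : Type*} [mΩ : MeasurableSpace Ω] [StandardBorelSpace Ω]
    (μ : Measure Ω) [IsProbabilityMeasure μ]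
    (Z : V → Ω → ℝ) (hZ : ∀ v, Measurable (Z v))
    (hMF : MarkovFaithful E μ Z hZ)
    (Yk Yl : V) (hYk : Yk ∈ Ys) (hYl : Yl ∈ Ys) (hne : Yk ≠ Yl)
    (S : Set V) (hS : S ⊆ Ys \ {Yk, Yl})
    (hcd : ¬ CondIndepGiven μ Z hZ S Yk Yl)
    (hci : CondIndepGiven μ Z hZ (S ∪ Xs) Yk Yl) :
    ¬ ∃ E' : V → V → Prop, Irreflexive E' ∧ Acyclic E' ∧
      (∀ x ∈ Xs, ∀ y ∈ Ys, ¬ E' x y) ∧ MarkovFaithful E' μ Z hZ := by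
  rintro ⟨F, _, _, hE, hMF2⟩
  have hkS : Yk ∉ S := fun h => (hS h).2 (by simp)
  have hlS : Yl ∉ S := fun h => (hS h).2 (by simp)
  have hnot : ∀ w, w ∈ Xs → w ∉ Ys := fun w h1 h2 => Set.disjoint_left.mp hdisj h1 h2
  have hkX : Yk ∉ S ∪ Xs := fun h => h.elim hkS (fun h => hnot _ h hYk)
  have hlX : Yl ∉ S ∪ Xs := fun h => h.elim hlS (fun h => hnot _ h hYl)
  have hsep : DSep F (S ∪ Xs) Yk Yl := (hMF2 Yk Yl hne _ hkX hlX).mpr hci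
  refine hcd ((hMF2 Yk Yl hne S hkS hlS).mp ?_)
  intro p hp
  rcases hsep p hp with ⟨i, v, hnc, hi, hv⟩ | ⟨i, v, hc, hi, hd⟩
  · rcases hv with hv | hv
    · exact Or.inl ⟨i, v, hnc, hi, hv⟩
    · obtain ⟨j, w, hcol, hj, hw⟩ :=
        exists_collider_mem F Xs Ys hcover hdisj hE p Yk Yl hYk hYl hp i v hi hv
      refine Or.inr ⟨j, w, hcol, hj, fun d hd => ?_⟩
      have hdX : d ∈ Xs := by
        unfold Descendant at hd
        induction hd with
        | refl => exact hw
        | tail _ hbc ih =>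
          by_contra hc
          rename_i c _
          have : c ∈ Xs ∪ Ys := hcover ▸ Set.mem_univ c
          exact hE _ ih _ (this.resolve_left hc) hbc
      exact fun hdS => hnot d hdX (hS hdS).1
  · exact Or.inr ⟨i, v, hc, hi, fun d h hdS => hd d h (Or.inl hdS)⟩

end VecCI
end

section
/- (Theorem 1, main identifiability result.) Let G be a directed acyclic graph on V = 𝐗 ∪ 𝐘, unidirectional from 𝐗 to 𝐘, and let the joint distribution of random variables (Z_v)_{v ∈ V} be Markov and faithful to G. Assume that at least one of the following holds: (C1) there exist distinct Xi, Xj ∈ 𝐗 and S ⊆ 𝐗 \ {Xi, Xj} such that Z_{Xi} and Z_{Xj} are conditionally independent given σ((Z_s)_{s ∈ S}) but conditionally dependent given σ((Z_s)_{s ∈ S ∪ 𝐘}); or (C2) there exist distinct Yk, Yl ∈ 𝐘 and S ⊆ 𝐘 \ {Yk, Yl} such that Z_{Yk} and Z_{Yl} are conditionally dependent given σ((Z_s)_{s ∈ S}) but conditionally independent given σ((Z_s)_{s ∈ S ∪ 𝐗}). Then there exists no directed acyclic graph G' on V containing no edge (x, y) with x ∈ 𝐗 and y ∈ 𝐘 to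 which the joint distribution of (Z_v)_{v ∈ V} is Markov and faithful; hence the causal direction 𝐗 → 𝐘 is identifiable from the observational distribution. -/
open MeasureTheory ProbabilityTheory

namespace VecCI

variable {V : Type*}

lemma desc_mem {E : V → V → Prop} {Xs : Set V} (h : ∀ u v, u ∈ Xs → E u v → v ∈ Xs)
    {c d : V} (hc : c ∈ Xs) (hd : Descendant E c d) : d ∈ Xs := by
  unfold Descendant at hd
  induction hd with
  | refl => exact hc
  | tail _ e ih => exact h _ _ ih e

/-- Conditioning additionally on the upstream block preserves separation downstream. -/
lemma dsep_down {E : V → V → Prop} {Xs Ys : Set V} (hcover : ∀ v, v ∈ Xs ∨ v ∈ Ys)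
    (hdisj : ∀ v, v ∈ Xs → v ∉ Ys) (hac : Acyclic E)
    (h : ∀ x ∈ Xs, ∀ y ∈ Ys, ¬ E x y) {S : Set V} {a b : V} (ha : a ∈ Xs)
    (hs : DSep E S a b) : DSep E (S ∪ Ys) a b := by
  intro p hp
  have hcl : ∀ u v, u ∈ Xs → E u v → v ∈ Xs := fun u v hu e =>
    (hcover v).resolve_right fun hv => h u hu v hv e
  rcases hs p hp with ⟨i, v, hn, hv, hvS⟩ | ⟨i, v, hc, hv, hd⟩
  · exact Or.inl ⟨i, v, hn, hv, Or.inl hvS⟩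
  · rcases hcover v with hvX | hvY
    · refine Or.inr ⟨i, v, hc, hv, fun d hdd => ?_⟩
      rintro (h1 | h1)
      · exact hd d hdd h1
      · exact hdisj d (desc_mem hcl hvX hdd) h1
    · obtain ⟨⟨hi0, hi1⟩, u, v', w, hu, hv', hw, e1, e2⟩ := hc
      obtain rfl : v = v' := by rw [hv] at hv'; exact Option.some.inj hv'
      have huY : u ∈ Ys := (hcover u).resolve_left fun hx => h u hx v hvY e1
      have hi : i - 1 ≠ 0 := by
        intro h0
        have h1 := hp.2.2.1
        rw [List.head?_eq_getElem?, ← h0, hu] at h1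
        exact hdisj a ha (Option.some.inj h1 ▸ huY)
      refine Or.inl ⟨i - 1, u, ⟨⟨by omega, by omega⟩, ?_⟩, hu, Or.inr huY⟩
      rintro ⟨_, _, u', w', _, hu', hw', _, e3⟩
      rw [hu] at hu'
      rw [show i - 1 + 1 = i by omega, hv] at hw'
      obtain rfl := Option.some.inj hu'
      obtain rfl := Option.some.inj hw'
      exact hac u (.tail (.single e1) e3)

/-- Separation upstream given a set including the downstream block survives dropping it. -/
lemma dsep_up {E : V → V → Prop} {Xs Ys : Set V} (hcover : ∀ v, v ∈ Xs ∨ v ∈ Ys)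
    (hdisj : ∀ v, v ∈ Xs → v ∉ Ys)
    (h : ∀ x ∈ Xs, ∀ y ∈ Ys, ¬ E x y) {S : Set V} (hSY : S ⊆ Ys) {a b : V}
    (ha : a ∈ Ys) (hb : b ∈ Ys)
    (hs : DSep E (S ∪ Xs) a b) : DSep E S a b := by
  intro p hp
  have hcl : ∀ u v, u ∈ Xs → E u v → v ∈ Xs := fun u v hu e =>
    (hcover v).resolve_right fun hv => h u hu v hv e
  by_contra hnb
  have hcol : ∀ i v, ColliderAt E p i → p[i]? = some v → v ∉ Xs := by
    intro i v hc hv hvX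
    exact hnb (Or.inr ⟨i, v, hc, hv, fun d hd hdS =>
      hdisj d (desc_mem hcl hvX hd) (hSY hdS)⟩)
  obtain ⟨_, hlen, hhead, hlast, hchain⟩ := id hp
  have hadj : ∀ i (hi : i + 1 < p.length), Adj E p[i] p[i+1] :=
    fun i hi => List.isChain_iff_getElem.mp hchain i hi
  rw [List.head?_eq_getElem?, List.getElem?_eq_getElem (by omega)] at hhead
  rw [List.getLast?_eq_getElem?, List.getElem?_eq_getElem (by omega)] at hlast
  have hhead := Option.some.inj hhead
  have hlast := Option.some.inj hlast
  -- once the path enters the downstream block it never leaves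
  have step : ∀ i (hi : i + 1 < p.length), p[i] ∈ Ys → p[i+1] ∈ Xs →
      ∀ j, (hj : i + 1 + j < p.length) →
        p[i + 1 + j] ∈ Xs ∧ E p[i + j] p[i + 1 + j] := by
    intro i hi hY hX j
    induction j with
    | zero =>
      intro hj
      exact ⟨hX, (hadj i hi).resolve_right fun e => h _ hX _ hY e⟩
    | succ j ih =>
      intro hj
      obtain ⟨h1, h2⟩ := ih (by omega)
      have e : E p[i + 1 + j] p[i + 1 + j + 1] := by
        refine (hadj (i + 1 + j) (by omega)).resolve_right fun e => ?_
        refine hcol (i + 1 + j) _ ⟨⟨by omega, by omega⟩, p[i+j], p[i+1+j], p[i+1+j+1],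
          ?_, ?_, ?_, h2, e⟩ (List.getElem?_eq_getElem (by omega)) h1
        · rw [show i + 1 + j - 1 = i + j by omega]
          exact List.getElem?_eq_getElem _
        · exact List.getElem?_eq_getElem _
        · exact List.getElem?_eq_getElem _
      refine ⟨hcl _ _ h1 e, ?_⟩
      have : i + (j + 1) = i + 1 + j := by omega
      simp only [this]
      exact e
  have hall : ∀ i (hi : i < p.length), p[i] ∈ Ys := by
    intro i
    induction i with
    | zero => intro hi; rw [hhead]; exact ha
    | succ i ih =>
      intro hi
      refine (hcover _).resolve_left fun hX => ?_
      have := (step i hi (ih (by omega)) hX (p.length - 1 - (i + 1)) (by omega)).1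
      simp only [show i + 1 + (p.length - 1 - (i + 1)) = p.length - 1 by omega] at this
      rw [hlast] at this
      exact hdisj _ this hb
  rcases hs p hp with ⟨i, v, hn, hv, hvS | hvX⟩ | ⟨i, v, hc, hv, hd⟩
  · exact hnb (Or.inl ⟨i, v, hn, hv, hvS⟩)
  · obtain ⟨hi, rfl⟩ := List.getElem?_eq_some_iff.mp hv
    exact hdisj _ hvX (hall i hi)
  · exact hnb (Or.inr ⟨i, v, hc, hv, fun d hdd hdS => hd d hdd (Or.inl hdS)⟩)

/-- Theorem 1, main identifiability result: if at least one of Conditions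
(C1) or (C2) holds, then the observational distribution is Markov and faithful to no DAG
that is unidirectional from `Ys` to `Xs`; hence the causal direction `Xs → Ys` is
identifiable. -/
theorem stmt_8 {V : Type*} [Fintype V] (E : V → V → Prop) (Xs Ys : Set V)
    (hcover : Xs ∪ Ys = Set.univ) (hdisj : Disjoint Xs Ys)
    (hXne : Xs.Nonempty) (hYne : Ys.Nonempty)
    (hirr : Irreflexive E) (hacyc : Acyclic E)
    (huni : Unidirectional E Xs Ys)
    {Ω : Type*} [mΩ : MeasurableSpace Ω] [StandardBorelSpace Ω]
    (μ : Measure Ω) [IsProbabilityMeasure μ]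
    (Z : V → Ω → ℝ) (hZ : ∀ v, Measurable (Z v))
    (hMF : MarkovFaithful E μ Z hZ)
    (hC : (∃ Xi Xj : V, Xi ∈ Xs ∧ Xj ∈ Xs ∧ Xi ≠ Xj ∧ ∃ S ⊆ Xs \ {Xi, Xj},
            CondIndepGiven μ Z hZ S Xi Xj ∧ ¬ CondIndepGiven μ Z hZ (S ∪ Ys) Xi Xj) ∨
          (∃ Yk Yl : V, Yk ∈ Ys ∧ Yl ∈ Ys ∧ Yk ≠ Yl ∧ ∃ S ⊆ Ys \ {Yk, Yl},
            ¬ CondIndepGiven μ Z hZ S Yk Yl ∧ CondIndepGiven μ Z hZ (S ∪ Xs) Yk Yl)) :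
    ¬ ∃ E' : V → V → Prop, Irreflexive E' ∧ Acyclic E' ∧
      (∀ x ∈ Xs, ∀ y ∈ Ys, ¬ E' x y) ∧ MarkovFaithful E' μ Z hZ := by
  rintro ⟨E', _, hac, hno, hMF'⟩
  have hcov : ∀ v, v ∈ Xs ∨ v ∈ Ys := fun v => by
    have : v ∈ Xs ∪ Ys := hcover ▸ Set.mem_univ v
    exact this
  have hdis : ∀ v, v ∈ Xs → v ∉ Ys := fun v h1 h2 => Set.disjoint_left.mp hdisj h1 h2
  rcases hC with ⟨a, b, ha, hb, hab, S, hS, h1, h2⟩ | ⟨a, b, ha, hb, hab, S, hS, h1, h2⟩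
  · have haS : a ∉ S := fun h => (hS h).2 (by simp)
    have hbS : b ∉ S := fun h => (hS h).2 (by simp)
    refine h2 ((hMF' a b hab (S ∪ Ys) ?_ ?_).mp
      (dsep_down hcov hdis hac hno ha ((hMF' a b hab S haS hbS).mpr h1)))
    · rintro (h | h)
      exacts [haS h, hdis a ha h]
    · rintro (h | h)
      exacts [hbS h, hdis b hb h]
  · have haS : a ∉ S := fun h => (hS h).2 (by simp)
    have hbS : b ∉ S := fun h => (hS h).2 (by simp)
    refine h1 ((hMF' a b hab S haS hbS).mp
      (dsep_up hcov hdis hno (fun s hs => (hS hs).1) ha hb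
        ((hMF' a b hab (S ∪ Xs) ?_ ?_).mpr h2)))
    · rintro (h | h)
      exacts [haS h, hdis a h ha]
    · rintro (h | h)
      exacts [hbS h, hdis b h hb]

end VecCI
end

section
/- (Lemma 4: graphical characterization of Condition (C2).) Let G be a directed acyclic graph on V = 𝐗 ∪ 𝐘, unidirectional from 𝐗 to 𝐘. Then the following are equivalent: (a) there exist distinct Yk, Yl ∈ 𝐘 and S ⊆ 𝐘 \ {Yk, Yl} such that S does not d-separate Yk and Yl in G but S ∪ 𝐗 d-separates Yk and Yl in G; (b) there exist distinct Yk, Yl ∈ 𝐘, a set S ⊆ 𝐘 \ {Yk, Yl}, and a path p between Yk and Yl such that (i) S d-separates Yk and Yl in the induced subgraph of G on 𝐘 (the graph containing only the vertices of 𝐘 and the edges of G between them), and (ii) p is unblocked by S in G and contains at least one vertex of 𝐗. -/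
open MeasureTheory ProbabilityTheory

namespace VecCI

variable {V : Type*}

/-- The induced subgraph of `E` on the vertex set `W`: only edges of `E` between
vertices of `W`. -/
def Restrict (E : V → V → Prop) (W : Set V) (u v : V) : Prop :=
  E u v ∧ u ∈ W ∧ v ∈ W

theorem collider_restrict (E : V → V → Prop) (Ys : Set V) (p : List V) (hp : ∀ v ∈ p, v ∈ Ys)
    (i : ℕ) : ColliderAt (Restrict E Ys) p i ↔ ColliderAt E p i := by
  constructor
  · rintro ⟨hi, u, v, w, h1, h2, h3, h4, h5⟩
    exact ⟨hi, u, v, w, h1, h2, h3, h4.1, h5.1⟩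
  · rintro ⟨hi, u, v, w, h1, h2, h3, h4, h5⟩
    have hu := hp u (List.mem_of_getElem? h1)
    have hv := hp v (List.mem_of_getElem? h2)
    have hw := hp w (List.mem_of_getElem? h3)
    exact ⟨hi, u, v, w, h1, h2, h3, ⟨h4, hu, hv⟩, ⟨h5, hw, hv⟩⟩

theorem desc_restrict (E : V → V → Prop) (Xs Ys : Set V) (hcover : Xs ∪ Ys = Set.univ)
    (huni : Unidirectional E Xs Ys) (v d : V) (hv : v ∈ Ys) (h : Descendant E v d) :
    d ∈ Ys ∧ Descendant (Restrict E Ys) v d := by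
  unfold Descendant at *
  induction h with
  | refl => exact ⟨hv, Relation.ReflTransGen.refl⟩
  | @tail b c _ hbc ih =>
    have hc : c ∈ Ys := by
      have : c ∈ Xs ∪ Ys := by rw [hcover]; trivial
      rcases this with h | h
      · exact absurd hbc (huni c h b ih.1)
      · exact h
    exact ⟨hc, ih.2.tail ⟨hbc, ih.1, hc⟩⟩

theorem desc_mono (E : V → V → Prop) (Ys : Set V) (v d : V)
    (h : Descendant (Restrict E Ys) v d) : Descendant E v d :=
  Relation.ReflTransGen.mono (r := Restrict E Ys) (p := E) (fun _ _ h => h.1) v d h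

theorem blocked_union (E : V → V → Prop) (Xs Ys S : Set V) (hcover : Xs ∪ Ys = Set.univ)
    (hdisj : Disjoint Xs Ys) (huni : Unidirectional E Xs Ys) (p : List V)
    (hp : ∀ v ∈ p, v ∈ Ys) : Blocked E (S ∪ Xs) p ↔ Blocked E S p := by
  have hX : ∀ v ∈ Ys, v ∉ Xs := fun v hv hx => Set.disjoint_left.1 hdisj hx hv
  constructor
  · rintro (⟨i, v, h1, h2, h3⟩ | ⟨i, v, h1, h2, h3⟩)
    · exact Or.inl ⟨i, v, h1, h2, h3.resolve_right (hX v (hp v (List.mem_of_getElem? h2)))⟩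
    · exact Or.inr ⟨i, v, h1, h2, fun d hd hs => h3 d hd (Or.inl hs)⟩
  · rintro (⟨i, v, h1, h2, h3⟩ | ⟨i, v, h1, h2, h3⟩)
    · exact Or.inl ⟨i, v, h1, h2, Or.inl h3⟩
    · refine Or.inr ⟨i, v, h1, h2, fun d hd hs => ?_⟩
      rcases hs with hs | hs
      · exact h3 d hd hs
      · exact hX d (desc_restrict E Xs Ys hcover huni v d
          (hp v (List.mem_of_getElem? h2)) hd).1 hs

theorem blocked_restrict (E : V → V → Prop) (Xs Ys S : Set V) (hcover : Xs ∪ Ys = Set.univ)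
    (huni : Unidirectional E Xs Ys) (p : List V)
    (hp : ∀ v ∈ p, v ∈ Ys) : Blocked (Restrict E Ys) S p ↔ Blocked E S p := by
  unfold Blocked NonColliderAt
  simp only [collider_restrict E Ys p hp]
  refine or_congr Iff.rfl ?_
  constructor
  · rintro ⟨i, v, h1, h2, h3⟩
    exact ⟨i, v, h1, h2, fun d hd => h3 d
      (desc_restrict E Xs Ys hcover huni v d (hp v (List.mem_of_getElem? h2)) hd).2⟩
  · rintro ⟨i, v, h1, h2, h3⟩
    exact ⟨i, v, h1, h2, fun d hd => h3 d (desc_mono E Ys v d hd)⟩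

theorem path_mono (E : V → V → Prop) (Ys : Set V) (p : List V) (a b : V)
    (h : IsPath (Restrict E Ys) p a b) : IsPath E p a b := by
  obtain ⟨h1, h2, h3, h4, h5⟩ := h
  exact ⟨h1, h2, h3, h4, h5.imp (fun _ _ h => h.imp And.left And.left)⟩

theorem path_mem (E : V → V → Prop) (Ys : Set V) (p : List V) (a b : V)
    (h : IsPath (Restrict E Ys) p a b) : ∀ v ∈ p, v ∈ Ys := by
  obtain ⟨h1, h2, h3, h4, h5⟩ := h
  intro v hv
  obtain ⟨i, hi, rfl⟩ := List.mem_iff_getElem.1 hv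
  have h6 := List.isChain_iff_getElem.1 h5
  by_cases hi' : i + 1 < p.length
  · rcases h6 i hi' with h | h
    · exact h.2.1
    · exact h.2.2
  · obtain ⟨j, rfl⟩ : ∃ j, i = j + 1 := ⟨i - 1, by omega⟩
    rcases h6 j hi with h | h
    · exact h.2.2
    · exact h.2.1

theorem path_restrict (E : V → V → Prop) (Ys : Set V) (p : List V) (a b : V)
    (h : IsPath E p a b) (hp : ∀ v ∈ p, v ∈ Ys) : IsPath (Restrict E Ys) p a b := by
  obtain ⟨h1, h2, h3, h4, h5⟩ := h
  refine ⟨h1, h2, h3, h4, List.isChain_iff_getElem.2 fun i hi => ?_⟩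
  have ha := hp _ (List.getElem_mem (l := p) (n := i) (by omega))
  have hb := hp _ (List.getElem_mem hi)
  rcases List.isChain_iff_getElem.1 h5 i hi with h | h
  · exact Or.inl ⟨h, ha, hb⟩
  · exact Or.inr ⟨h, hb, ha⟩

/-- A path between vertices of `Ys` meeting `Xs` is blocked by any superset of `Xs`. -/
theorem blocked_of_meets (E : V → V → Prop) (Xs Ys S : Set V) (hcover : Xs ∪ Ys = Set.univ)
    (hdisj : Disjoint Xs Ys) (hacyc : Acyclic E) (huni : Unidirectional E Xs Ys)
    (p : List V) (a b : V) (ha : a ∈ Ys) (hb : b ∈ Ys) (h : IsPath E p a b)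
    (x : V) (hx : x ∈ Xs) (hxp : x ∈ p) : Blocked E (S ∪ Xs) p := by
  by_contra hnb
  obtain ⟨h1, h2, h3, h4, h5⟩ := h
  have hX : ∀ v ∈ Ys, v ∉ Xs := fun v hv hx => Set.disjoint_left.1 hdisj hx hv
  have key : ∀ i v, p[i]? = some v → v ∈ Xs → ColliderAt E p i := by
    intro i v hi hv
    by_contra hc
    refine hnb (Or.inl ⟨i, v, ⟨⟨?_, ?_⟩, hc⟩, hi, Or.inr hv⟩)
    · rcases Nat.eq_zero_or_pos i with rfl | h
      · rw [List.head?_eq_getElem?, hi] at h3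
        cases h3
        exact absurd hv (hX _ ha)
      · exact h
    · by_contra hlt
      have hl : i < p.length := (List.getElem?_eq_some_iff.1 hi).1
      have : p.length - 1 = i := by omega
      rw [List.getLast?_eq_getElem?, this, hi] at h4
      cases h4
      exact hX _ hb hv
  obtain ⟨i, hi⟩ := List.mem_iff_getElem?.1 hxp
  obtain ⟨hint, u, v, w, e1, e2, e3, huv, hwv⟩ := key i x hi hx
  have hvx : v = x := by rw [e2] at hi; exact Option.some.inj hi
  subst hvx
  have hw : w ∈ Xs := by
    have : w ∈ Xs ∪ Ys := by rw [hcover]; trivial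
    exact this.resolve_right (fun hw => huni v hx w hw hwv)
  obtain ⟨_, u', v', w', f1, f2, f3, f4, f5⟩ := key (i + 1) w e3 hw
  have g1 : u' = v := by
    rw [Nat.add_sub_cancel, e2] at f1; exact (Option.some.inj f1).symm
  have g2 : v' = w := by rw [e3] at f2; exact (Option.some.inj f2).symm
  subst g1 g2
  exact hacyc _ (Relation.TransGen.tail (Relation.TransGen.single f4) hwv)

/-- Lemma 4, graphical characterization of Condition (C2). -/
theorem stmt_10 {V : Type*} [Fintype V] (E : V → V → Prop) (Xs Ys : Set V)
    (hcover : Xs ∪ Ys = Set.univ) (hdisj : Disjoint Xs Ys)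
    (hXne : Xs.Nonempty) (hYne : Ys.Nonempty)
    (hirr : Irreflexive E) (hacyc : Acyclic E)
    (huni : Unidirectional E Xs Ys) :
    (∃ Yk Yl : V, Yk ∈ Ys ∧ Yl ∈ Ys ∧ Yk ≠ Yl ∧ ∃ S ⊆ Ys \ {Yk, Yl},
        ¬ DSep E S Yk Yl ∧ DSep E (S ∪ Xs) Yk Yl) ↔
    (∃ Yk Yl : V, Yk ∈ Ys ∧ Yl ∈ Ys ∧ Yk ≠ Yl ∧ ∃ S ⊆ Ys \ {Yk, Yl}, ∃ p : List V,
        -- (i) S d-separates Yk and Yl in the induced subgraph of the DAG on Ys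
        DSep (Restrict E Ys) S Yk Yl ∧
        -- (ii) p is a path unblocked by S in the full graph, passing through Xs
        IsPath E p Yk Yl ∧ ¬ Blocked E S p ∧ (∃ v ∈ Xs, v ∈ p)) := by
  have hY : ∀ p : List V, (¬ ∃ v ∈ Xs, v ∈ p) → ∀ v ∈ p, v ∈ Ys := by
    intro p hp v hv
    have : v ∈ Xs ∪ Ys := by rw [hcover]; trivial
    exact this.resolve_left (fun hx => hp ⟨v, hx, hv⟩)
  constructor
  · rintro ⟨a, b, ha, hb, hab, S, hS, hn, hd⟩
    unfold DSep at hn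
    push Not at hn
    obtain ⟨p, hp, hpb⟩ := hn
    refine ⟨a, b, ha, hb, hab, S, hS, p, ?_, hp, hpb, ?_⟩
    · intro q hq
      have hm := path_mem E Ys q a b hq
      rw [blocked_restrict E Xs Ys S hcover huni q hm,
        ← blocked_union E Xs Ys S hcover hdisj huni q hm]
      exact hd q (path_mono E Ys q a b hq)
    · by_contra hx
      exact hpb ((blocked_union E Xs Ys S hcover hdisj huni p (hY p hx)).1 (hd p hp))
  · rintro ⟨a, b, ha, hb, hab, S, hS, p, hd, hp, hpb, hx⟩
    refine ⟨a, b, ha, hb, hab, S, hS, fun h => hpb (h p hp), fun q hq => ?_⟩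
    by_cases hqx : ∃ v ∈ Xs, v ∈ q
    · obtain ⟨x, hx, hxq⟩ := hqx
      exact blocked_of_meets E Xs Ys S hcover hdisj hacyc huni q a b ha hb hq x hx hxq
    · have hm := hY q hqx
      rw [blocked_union E Xs Ys S hcover hdisj huni q hm,
        ← blocked_restrict E Xs Ys S hcover huni q hm]
      exact hd q (path_restrict E Ys q a b hq hm)

end VecCI
end

section
/- (Common-confounder sufficient condition for (C2).) Let G be a directed acyclic graph on V = 𝐗 ∪ 𝐘, unidirectional from 𝐗 to 𝐘. Suppose there exist distinct Yk, Yl ∈ 𝐘, a set S ⊆ 𝐘 \ {Yk, Yl} that d-separates Yk and Yl in the induced subgraph of G on 𝐘, and a common confounder Xi ∈ 𝐗 with edges (Xi, Yk) ∈ E and (Xi, Yl) ∈ E. Then Condition (C2) holds in its graphical form: S does not d-separate Yk and Yl in G, while S ∪ 𝐗 d-separates Yk and Yl in G. -/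
open MeasureTheory ProbabilityTheory

namespace VecCI

variable {V : Type*}

/-- a common confounder `Yk ← Xi → Yl` together with d-separation of
`Yk, Yl` by `S ⊆ Ys \ {Yk, Yl}` in the induced subgraph on `Ys` yields the graphical
form of Condition (C2). -/
theorem stmt_12 {V : Type*} [Fintype V] (E : V → V → Prop) (Xs Ys : Set V)
    (hcover : Xs ∪ Ys = Set.univ) (hdisj : Disjoint Xs Ys)
    (hXne : Xs.Nonempty) (hYne : Ys.Nonempty)
    (hirr : Irreflexive E) (hacyc : Acyclic E)
    (huni : Unidirectional E Xs Ys)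
    (Yk Yl : V) (hYk : Yk ∈ Ys) (hYl : Yl ∈ Ys) (hne : Yk ≠ Yl)
    (S : Set V) (hS : S ⊆ Ys \ {Yk, Yl})
    (hsepY : DSep (Restrict E Ys) S Yk Yl)
    (Xi : V) (hXi : Xi ∈ Xs) (hEk : E Xi Yk) (hEl : E Xi Yl) :
    ¬ DSep E S Yk Yl ∧ DSep E (S ∪ Xs) Yk Yl := by
  have hXY : ∀ v, v ∈ Xs → v ∈ Ys → False := fun v h1 h2 => Set.disjoint_left.mp hdisj h1 h2
  have hor : ∀ v, v ∈ Xs ∨ v ∈ Ys := fun v => by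
    have : v ∈ Xs ∪ Ys := hcover ▸ Set.mem_univ v
    exact this
  constructor
  · intro h
    have hk : Xi ≠ Yk := fun e => hXY Xi hXi (e ▸ hYk)
    have hl : Xi ≠ Yl := fun e => hXY Xi hXi (e ▸ hYl)
    have hp : IsPath E [Yk, Xi, Yl] Yk Yl := by
      refine ⟨?_, by simp, by simp, by simp, ?_⟩
      · simp [hne, hk.symm, hl]
      · exact List.isChain_cons_cons.mpr ⟨Or.inr hEk,
          List.isChain_cons_cons.mpr ⟨Or.inl hEl, List.isChain_singleton _⟩⟩
    rcases h _ hp with ⟨i, v, hn, hv, hvS⟩ | ⟨i, v, hn, hv, -⟩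
    · obtain ⟨⟨h0, h1⟩, -⟩ := hn
      simp only [List.length_cons, List.length_nil] at h1
      have : i = 1 := by omega
      subst this
      simp at hv
      subst hv
      exact hXY _ hXi (hS hvS).1
    · obtain ⟨⟨h0, h1⟩, u, v', w, hu, hv', hw, e1, e2⟩ := hn
      simp only [List.length_cons, List.length_nil] at h1
      have : i = 1 := by omega
      subst this
      simp at hu hv'
      subst hu hv'
      exact huni _ hXi _ hYk e1
  · intro p hp
    obtain ⟨hnd, hlen, hhead, hlast, hch⟩ := hp
    classical
    by_cases hx : ∃ i : ℕ, ∃ v, p[i]? = some v ∧ v ∈ Xs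
    · left
      obtain ⟨v, hv, hvX⟩ := Nat.find_spec hx
      have hmin := fun m => @Nat.find_min _ _ hx m
      generalize Nat.find hx = i at hv hmin
      have hi0 : i ≠ 0 := by
        rintro rfl
        rw [List.head?_eq_getElem?] at hhead
        rw [hhead] at hv
        exact hXY v hvX (Option.some.inj hv ▸ hYk)
      have hilt : i < p.length := (List.getElem?_eq_some_iff.mp hv).1
      have hil : i + 1 < p.length := by
        by_contra hcon
        have : i = p.length - 1 := by omega
        rw [List.getLast?_eq_getElem?, ← this, hv] at hlast
        exact hXY v hvX (Option.some.inj hlast ▸ hYl)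
      refine ⟨i, v, ⟨⟨by omega, hil⟩, ?_⟩, hv, Or.inr hvX⟩
      rintro ⟨-, u, v', w, hu, hv', -, e1, -⟩
      rw [hv] at hv'
      cases hv'
      rcases hor u with h | h
      · exact hmin (i - 1) (by omega) ⟨u, hu, h⟩
      · exact huni v hvX u h e1
    · have hY : ∀ (i : ℕ) v, p[i]? = some v → v ∈ Ys := fun i v hv =>
        (hor v).resolve_left fun h => hx ⟨i, v, hv, h⟩
      have hcol : ∀ i, ColliderAt (Restrict E Ys) p i ↔ ColliderAt E p i := by
        intro i
        constructor
        · rintro ⟨hi, u, v, w, hu, hv, hw, e1, e2⟩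
          exact ⟨hi, u, v, w, hu, hv, hw, e1.1, e2.1⟩
        · rintro ⟨hi, u, v, w, hu, hv, hw, e1, e2⟩
          exact ⟨hi, u, v, w, hu, hv, hw, ⟨e1, hY _ _ hu, hY _ _ hv⟩,
            ⟨e2, hY _ _ hw, hY _ _ hv⟩⟩
      have hp' : IsPath (Restrict E Ys) p Yk Yl := by
        refine ⟨hnd, hlen, hhead, hlast, ?_⟩
        refine List.isChain_iff_getElem.mpr fun i hi => ?_
        have h1 := hY i _ (List.getElem?_eq_getElem (by omega))
        have h2 := hY (i + 1) _ (List.getElem?_eq_getElem hi)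
        rcases List.isChain_iff_getElem.mp hch i hi with h | h
        · exact Or.inl ⟨h, h1, h2⟩
        · exact Or.inr ⟨h, h2, h1⟩
      rcases hsepY p hp' with ⟨i, v, hn, hv, hvS⟩ | ⟨i, v, hn, hv, hd⟩
      · exact Or.inl ⟨i, v, ⟨hn.1, fun h => hn.2 ((hcol i).mpr h)⟩, hv, Or.inl hvS⟩
      · refine Or.inr ⟨i, v, (hcol i).mp hn, hv, fun d hvd => ?_⟩
        have key : Descendant (Restrict E Ys) v d ∧ d ∈ Ys := by
          unfold Descendant at hvd ⊢
          induction hvd with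
          | refl => exact ⟨.refl, hY _ _ hv⟩
          | @tail b c _ hbc ih =>
            have hc : c ∈ Ys := (hor c).resolve_left fun h => huni c h b ih.2 hbc
            exact ⟨ih.1.tail ⟨hbc, ih.2, hc⟩, hc⟩
        rintro (h | h)
        · exact hd d key.1 h
        · exact hXY d h key.2

end VecCI
end

section
/- (Theorem 2, part for Condition (C1).) Let G be a directed acyclic graph on V = 𝐗 ∪ 𝐘, unidirectional from 𝐗 to 𝐘, and assume the graphical form of Condition (C1): there exist distinct Xi, Xj ∈ 𝐗 and S ⊆ 𝐗 \ {Xi, Xj} such that S d-separates Xi and Xj but S ∪ 𝐘 does not d-separate Xi and Xj. Then d(𝐗|𝐘) := edgeDens(G_{𝐗|𝐘}) − edgeDens(G_𝐗) > 0. -/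
open MeasureTheory ProbabilityTheory

namespace VecCI

variable {V : Type*}

/-- The skeleton produced by an oracle PC algorithm run on the group `W`: the unordered
pair `{i, j}` of distinct vertices of `W` is an edge iff no `S ⊆ W \ {i, j}` d-separates
`i` and `j` in the full graph. -/
def EdgePlain (E : V → V → Prop) (W : Set V) : Set (Sym2 V) :=
  {e | ∃ i j : V, e = s(i, j) ∧ i ∈ W ∧ j ∈ W ∧ i ≠ j ∧
    ∀ S : Set V, S ⊆ W \ {i, j} → ¬ DSep E S i j}

/-- The skeleton produced by an oracle PC algorithm run on the group `W` with the other
group `C` added to every conditioning set: `{i, j}` is an edge iff there is no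
`S ⊆ W \ {i, j}` such that `S ∪ C` d-separates `i` and `j` in the full graph. -/
def EdgeCond (E : V → V → Prop) (W C : Set V) : Set (Sym2 V) :=
  {e | ∃ i j : V, e = s(i, j) ∧ i ∈ W ∧ j ∈ W ∧ i ≠ j ∧
    ∀ S : Set V, S ⊆ W \ {i, j} → ¬ DSep E (S ∪ C) i j}

/-- Edge density of an edge set `A` over a vertex group `W` with `n = |W|`:
`|A| / (n (n − 1) / 2)`. -/
noncomputable def edgeDens (A : Set (Sym2 V)) (W : Set V) : ℝ :=
  (A.ncard : ℝ) / ((W.ncard : ℝ) * ((W.ncard : ℝ) - 1) / 2)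

lemma isPath_iff (E : V → V → Prop) (p : List V) (a b : V) :
    IsPath E p a b ↔ p.Nodup ∧ 2 ≤ p.length ∧ p[0]? = some a ∧ p[p.length - 1]? = some b ∧
      ∀ k u v, p[k]? = some u → p[k+1]? = some v → Adj E u v := by
  unfold IsPath
  rw [List.head?_eq_getElem?, List.getLast?_eq_getElem?]
  refine and_congr_right fun _ => and_congr_right fun _ => and_congr_right fun _ =>
    and_congr_right fun _ => ?_
  change List.IsChain (Adj E) p ↔ _
  rw [List.isChain_iff_getElem]
  constructor
  · intro h k u v hu hv
    obtain ⟨h1, rfl⟩ := List.getElem?_eq_some_iff.1 hu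
    obtain ⟨h2, rfl⟩ := List.getElem?_eq_some_iff.1 hv
    exact h k h2
  · intro h k hk
    exact h k _ _ (List.getElem?_eq_getElem (by omega)) (List.getElem?_eq_getElem hk)

lemma not_edge_symm {E : V → V → Prop} (hac : Acyclic E) {u v : V} (h : E u v) : ¬ E v u :=
  fun h' => hac u (.tail (.single h) h')

lemma collider_reverse {E : V → V → Prop} {p : List V} {i : ℕ} (hi : Interior p i)
    (h : ColliderAt E p.reverse i) : ColliderAt E p (p.length - 1 - i) := by
  obtain ⟨-, u, v, w, hu, hv, hw, h1, h2⟩ := h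
  obtain ⟨h0, hl⟩ := hi
  rw [List.getElem?_reverse (by omega)] at hu hv hw
  refine ⟨⟨by omega, by omega⟩, w, v, u, ?_, hv, ?_, h2, h1⟩
  · rw [← hw]; congr 1; try omega
  · rw [← hu]; congr 1; try omega

lemma collider_reverse' {E : V → V → Prop} {p : List V} {i : ℕ} (hi : Interior p i)
    (h : ColliderAt E p (p.length - 1 - i)) : ColliderAt E p.reverse i := by
  obtain ⟨h0, hl⟩ := hi
  have := @collider_reverse V E p.reverse (p.length - 1 - i)
    ⟨by omega, by simp; omega⟩ (by simpa using h)
  have e : p.reverse.length - 1 - (p.length - 1 - i) = i := by simp; omega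
  rwa [e] at this

lemma blocked_reverse {E : V → V → Prop} {S : Set V} {p : List V}
    (h : Blocked E S p.reverse) : Blocked E S p := by
  have hint : ∀ i, Interior p.reverse i → Interior p i := fun i h => by
    simpa [Interior] using h
  rcases h with ⟨i, v, ⟨hi, hc⟩, hv, hS⟩ | ⟨i, v, hc, hv, hS⟩
  · have hi' := hint i hi
    left
    refine ⟨p.length - 1 - i, v, ⟨⟨?_, ?_⟩, fun hc' => hc (collider_reverse' hi' hc')⟩, ?_, hS⟩
    · have := hi'.2; omega
    · have := hi'.1; have := hi'.2; omega
    · have := hi'.2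
      rwa [List.getElem?_reverse (by omega)] at hv
  · have hi' := hint i hc.1
    right
    refine ⟨p.length - 1 - i, v, collider_reverse hi' hc, ?_, hS⟩
    have := hi'.2
    rwa [List.getElem?_reverse (by omega)] at hv

lemma dsep_symm {E : V → V → Prop} {S : Set V} {a b : V} (h : DSep E S a b) : DSep E S b a := by
  intro p hp
  refine blocked_reverse (h _ ?_)
  obtain ⟨h1, h2, h3, h4, h5⟩ := hp
  refine ⟨List.nodup_reverse.2 h1, by simpa using h2, by simpa using h4, by simpa using h3, ?_⟩
  refine List.isChain_reverse.2 (h5.imp fun a b h => h.symm)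

lemma dsep_parents {E : V → V → Prop} (hac : Acyclic E) {a b : V} (hnadj : ¬ Adj E a b)
    (hnd : ¬ Relation.TransGen E a b) : DSep E {v | E v a} a b := by
  intro p hp
  rw [isPath_iff] at hp
  obtain ⟨-, hlen, ha, hb, hadj⟩ := hp
  by_contra hnb
  have hget : ∀ k, k < p.length → ∃ v, p[k]? = some v := fun k hk =>
    ⟨_, List.getElem?_eq_getElem hk⟩
  have key : ∀ k u v, p[k]? = some u → p[k+1]? = some v → E u v ∧ Relation.TransGen E a v := by
    intro k
    induction k with
    | zero =>
      intro u v hu hv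
      obtain rfl : a = u := by rw [ha] at hu; exact Option.some.inj hu
      rcases hadj 0 a v hu hv with h | h
      · exact ⟨h, .single h⟩
      · exfalso
        have h1 := (List.getElem?_eq_some_iff.1 hv).1
        by_cases hl : p.length = 2
        · rw [hl] at hb
          obtain rfl : v = b := by simp_all
          exact hnadj (.inr h)
        · refine hnb (.inl ⟨1, v, ⟨⟨by omega, by omega⟩, ?_⟩, hv, h⟩)
          rintro ⟨-, u', v', w', h1, h2, h3, h4, h5⟩
          simp only [Nat.sub_self] at h1
          obtain rfl : a = u' := by rw [ha] at h1; exact Option.some.inj h1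
          obtain rfl : v = v' := by simp only [Nat.zero_add] at hv; rw [hv] at h2; exact Option.some.inj h2
          exact not_edge_symm hac h h4
    | succ k ih =>
      intro u v hu hv
      have hl := (List.getElem?_eq_some_iff.1 hv).1
      obtain ⟨t, ht⟩ := hget k (by omega)
      obtain ⟨h1, h2⟩ := ih t u ht hu
      rcases hadj _ u v hu hv with h | h
      · exact ⟨h, h2.tail h⟩
      · exfalso
        refine hnb (.inr ⟨k+1, u, ⟨⟨by omega, by omega⟩, t, u, v, by simpa using ht, hu, hv, h1, h⟩,
          hu, ?_⟩)
        intro d hd hda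
        exact hac a ((h2.trans_left hd).tail hda)
  obtain ⟨t, ht⟩ := hget (p.length - 2) (by omega)
  refine hnd (key (p.length - 2) t b ht ?_).2
  rw [← hb]; congr 1; omega

lemma adj_of_edgePlain {E : V → V → Prop} {Xs Ys : Set V} (hcover : Xs ∪ Ys = Set.univ)
    (hac : Acyclic E) (huni : Unidirectional E Xs Ys) {i j : V} (hi : i ∈ Xs) (hj : j ∈ Xs)
    (h : ∀ S : Set V, S ⊆ Xs \ {i, j} → ¬ DSep E S i j) : Adj E i j := by
  by_contra hn
  have hsub : ∀ a b : V, a ∈ Xs → ¬ Adj E a b → {v | E v a} ⊆ Xs \ {a, b} := by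
    intro a b ha hn v hv
    refine ⟨?_, ?_⟩
    · have : v ∈ Xs ∪ Ys := hcover ▸ Set.mem_univ v
      exact this.resolve_right fun hy => huni a ha v hy hv
    · rintro (rfl | hvb)
      · exact hac v (.single hv)
      · exact hn (.inr (by rw [Set.mem_singleton_iff] at hvb; exact hvb ▸ hv))
  by_cases hd : Relation.TransGen E i j
  · have hd' : ¬ Relation.TransGen E j i := fun h' => hac i (hd.trans h')
    have hn' : ¬ Adj E j i := fun h => hn h.symm
    refine h {v | E v j} ?_ (dsep_symm (dsep_parents hac hn' hd'))
    rw [Set.pair_comm]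
    exact hsub j i hj hn'
  · exact h _ (hsub i j hi hn) (dsep_parents hac hn hd)

lemma not_dsep_of_adj {E : V → V → Prop} {i j : V} (hne : i ≠ j) (h : Adj E i j) (S : Set V) :
    ¬ DSep E S i j := by
  intro hd
  have := hd [i, j] ⟨by simpa using hne, by simp, rfl, rfl,
    by change List.IsChain _ _; simpa using h⟩
  have hno : ∀ k, ¬ Interior [i, j] k := by
    rintro k ⟨h1, h2⟩
    simp at h2; omega
  rcases this with ⟨k, v, h, -⟩ | ⟨k, v, h, -⟩
  · exact hno k h.1
  · exact hno k h.1

lemma not_dsep_of_vstruct {E : V → V → Prop} {u v w y : V} (huw : u ≠ w) (huv : u ≠ v)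
    (hvw : v ≠ w) (h1 : E u v) (h2 : E w v) (hy : Descendant E v y) {S : Set V} (hyS : y ∈ S) :
    ¬ DSep E S u w := by
  intro hd
  have := hd [u, v, w] ⟨by simp [huw, huv, hvw], by simp, rfl, rfl,
    by change List.IsChain _ _; simp [Adj, h1, h2]⟩
  have hno : ∀ k, Interior [u, v, w] k → k = 1 := by
    rintro k ⟨h1, h2⟩
    simp at h2; omega
  rcases this with ⟨k, x, h, -⟩ | ⟨k, x, h, hx, hxS⟩
  · obtain rfl := hno k h.1
    exact h.2 ⟨h.1, u, v, w, rfl, rfl, rfl, h1, h2⟩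
  · obtain rfl := hno k h.1
    obtain rfl : v = x := by simpa using hx
    exact hxS y hy hyS

/-- Shortcutting a collider with adjacent parents. -/
lemma shortcut {E : V → V → Prop} (hac : Acyclic E) {T : Set V} {p : List V} {a b : V} {i : ℕ}
    (hp : IsPath E p a b) (hopen : ¬ Blocked E T p) (hi : Interior p i) {u v w y : V}
    (hu : p[i-1]? = some u) (hv : p[i]? = some v) (hw : p[i+1]? = some w) (h1 : E u v)
    (h2 : E w v) (hy : Descendant E v y) (hyT : y ∈ T) (hadj : Adj E u w) :
    IsPath E (p.eraseIdx i) a b ∧ ¬ Blocked E T (p.eraseIdx i) := by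
  obtain ⟨hi0, hil⟩ := hi
  have hlen : (p.eraseIdx i).length = p.length - 1 := List.length_eraseIdx_of_lt (by omega)
  have hlt : ∀ k, k < i → (p.eraseIdx i)[k]? = p[k]? := fun k hk => by
    rw [List.getElem?_eraseIdx, if_pos hk]
  have hge : ∀ k, i ≤ k → (p.eraseIdx i)[k]? = p[k+1]? := fun k hk => by
    rw [List.getElem?_eraseIdx, if_neg (by omega)]
  constructor
  · rw [isPath_iff] at hp ⊢
    obtain ⟨hnd, hl, ha, hb, hch⟩ := hp
    refine ⟨hnd.sublist (List.eraseIdx_sublist ..), by omega, by rw [hlt 0 hi0, ha], ?_, ?_⟩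
    · rw [hlen, hge _ (by omega), ← hb]; congr 1; omega
    · intro k s t hs ht
      rcases lt_trichotomy (k+1) i with hk | hk | hk
      · rw [hlt _ (by omega)] at hs ht
        exact hch k s t hs ht
      · subst hk
        rw [hlt _ (by omega)] at hs
        rw [hge _ (by omega)] at ht
        simp only [Nat.add_sub_cancel] at hu
        rw [hu] at hs; rw [hw] at ht
        cases hs; cases ht; exact hadj
      · rw [hge _ (by omega)] at hs ht
        exact hch _ s t hs ht
  · -- status of vertices away from the shortcut
    have clt : ∀ k, k + 1 < i → (ColliderAt E (p.eraseIdx i) k ↔ ColliderAt E p k) := by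
      intro k hk
      unfold ColliderAt Interior
      rw [hlt (k-1) (by omega), hlt k (by omega), hlt (k+1) hk, hlen]
      refine and_congr_left fun _ => ?_
      omega
    have cgt : ∀ k, i < k → (ColliderAt E (p.eraseIdx i) k ↔ ColliderAt E p (k+1)) := by
      intro k hk
      unfold ColliderAt Interior
      rw [hge (k-1) (by omega), hge k (by omega), hge (k+1) (by omega), hlen,
        show k - 1 + 1 = k + 1 - 1 by omega]
      refine and_congr_left fun _ => ?_
      omega
    have huy : Descendant E u y := Relation.ReflTransGen.head h1 hy
    have hwy : Descendant E w y := Relation.ReflTransGen.head h2 hy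
    rintro (⟨k, x, ⟨⟨hk0, hkl⟩, hkc⟩, hx, hxT⟩ | ⟨k, x, hkc, hx, hxT⟩)
    · rw [hlen] at hkl
      by_cases c1 : k + 1 < i
      · rw [hlt _ (by omega)] at hx
        exact hopen (.inl ⟨k, x, ⟨⟨hk0, by omega⟩, fun h => hkc ((clt k c1).2 h)⟩, hx, hxT⟩)
      by_cases c2 : k + 1 = i
      · subst c2
        rw [hlt _ (by omega)] at hx
        refine hopen (.inl ⟨k, x, ⟨⟨hk0, by omega⟩, ?_⟩, hx, hxT⟩)
        rintro ⟨-, r, s, t, hr, hs, ht, e1, e2⟩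
        simp only [Nat.add_sub_cancel] at hu
        rw [hu] at hs; rw [hv] at ht
        cases hs; cases ht
        exact not_edge_symm hac h1 e2
      by_cases c3 : k = i
      · subst c3
        rw [hge _ le_rfl] at hx
        refine hopen (.inl ⟨k+1, x, ⟨⟨by omega, by omega⟩, ?_⟩, hx, hxT⟩)
        rintro ⟨-, r, s, t, hr, hs, ht, e1, e2⟩
        simp only [Nat.add_sub_cancel] at hr
        rw [hv] at hr; rw [hw] at hs
        cases hr; cases hs
        exact not_edge_symm hac h2 e1
      · rw [hge _ (by omega)] at hx
        exact hopen (.inl ⟨k+1, x, ⟨⟨by omega, by omega⟩,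
          fun h => hkc ((cgt k (by omega)).2 h)⟩, hx, hxT⟩)
    · by_cases c1 : k + 1 < i
      · rw [hlt _ (by omega)] at hx
        exact hopen (.inr ⟨k, x, (clt k c1).1 hkc, hx, hxT⟩)
      by_cases c2 : k + 1 = i
      · subst c2
        rw [hlt _ (by omega)] at hx
        simp only [Nat.add_sub_cancel] at hu
        rw [hu] at hx; cases hx
        exact hxT y huy hyT
      by_cases c3 : k = i
      · subst c3
        rw [hge _ le_rfl, hw] at hx
        cases hx
        exact hxT y hwy hyT
      · rw [hge _ (by omega)] at hx
        exact hopen (.inr ⟨k+1, x, (cgt k (by omega)).1 hkc, hx, hxT⟩)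

/-- Existence of an unshielded collider with a descendant in `Ys`. -/
lemma exists_vstruct {E : V → V → Prop} {Xs Ys : Set V} (hcover : Xs ∪ Ys = Set.univ)
    (hac : Acyclic E) {Xi Xj : V} (hXi : Xi ∈ Xs) (hXj : Xj ∈ Xs) {S : Set V}
    (hsep : DSep E S Xi Xj) : ∀ (n : ℕ) (p : List V), p.length = n → IsPath E p Xi Xj →
    ¬ Blocked E (S ∪ Ys) p → ∃ u v w y, u ∈ Xs ∧ w ∈ Xs ∧ u ≠ w ∧ E u v ∧ E w v ∧
      Descendant E v y ∧ y ∈ Ys ∧ ¬ Adj E u w := by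
  intro n
  induction n using Nat.strong_induction_on with
  | _ n ih =>
    intro p hn hp hopen
    rcases hsep p hp with ⟨i, v, hi, hv, hvS⟩ | ⟨i, v, hc, hv, hvS⟩
    · exact absurd (.inl ⟨i, v, hi, hv, .inl hvS⟩) hopen
    · obtain ⟨y, hy, hyY⟩ : ∃ y, Descendant E v y ∧ y ∈ Ys := by
        by_contra hno
        push Not at hno
        exact hopen (.inr ⟨i, v, hc, hv, fun d hd hdm => hdm.elim (hvS d hd) (hno d hd)⟩)
      obtain ⟨⟨hi0, hil⟩, u, v', w, hu, hv', hw, h1, h2⟩ := id hc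
      rw [hv] at hv'; cases hv'
      have hX : ∀ x, x ∉ S ∪ Ys → x ∈ Xs := fun x hx => by
        have : x ∈ Xs ∪ Ys := hcover ▸ Set.mem_univ x
        exact this.resolve_right fun h => hx (.inr h)
      have hp' := (isPath_iff E p Xi Xj).1 hp
      obtain ⟨hnd, hl, ha, hb, -⟩ := hp'
      have huX : u ∈ Xs := by
        by_cases c : i - 1 = 0
        · rw [c, ha] at hu; cases hu; exact hXi
        · refine hX u fun hm => hopen (.inl ⟨i-1, u, ⟨⟨by omega, by omega⟩, ?_⟩, hu, hm⟩)
          rintro ⟨-, r, s, t, hr, hs, ht, e1, e2⟩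
          rw [hu] at hs; rw [show i - 1 + 1 = i by omega, hv] at ht
          cases hs; cases ht
          exact not_edge_symm hac h1 e2
      have hwX : w ∈ Xs := by
        by_cases c : i + 1 = p.length - 1
        · rw [c, hb] at hw; cases hw; exact hXj
        · refine hX w fun hm => hopen (.inl ⟨i+1, w, ⟨⟨by omega, by omega⟩, ?_⟩, hw, hm⟩)
          rintro ⟨-, r, s, t, hr, hs, ht, e1, e2⟩
          rw [hw] at hs; rw [show i + 1 - 1 = i by omega, hv] at hr
          cases hs; cases hr
          exact not_edge_symm hac h2 e1
      have huw : u ≠ w := by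
        rintro rfl
        have := hnd.getElem_inj_iff.1 ((List.getElem?_eq_some_iff.1 hu).2.trans
          (List.getElem?_eq_some_iff.1 hw).2.symm)
        omega
      by_cases hadj : Adj E u w
      · obtain ⟨hq, hqo⟩ := shortcut hac hp hopen ⟨hi0, hil⟩ hu hv hw h1 h2 hy (.inr hyY) hadj
        refine ih _ ?_ _ rfl hq hqo
        rw [List.length_eraseIdx_of_lt (by omega)]; omega
      · exact ⟨u, v, w, y, huX, hwX, huw, h1, h2, hy, hyY, hadj⟩

/-- Theorem 2, part for Condition (C1): under the graphical form of (C1),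
`d(X|Y) = edgeDens(G_{X|Y}) − edgeDens(G_X) > 0`. -/
theorem stmt_14 {V : Type*} [Fintype V] (E : V → V → Prop) (Xs Ys : Set V)
    (hcover : Xs ∪ Ys = Set.univ) (hdisj : Disjoint Xs Ys)
    (hXne : Xs.Nonempty) (hYne : Ys.Nonempty)
    (hirr : Irreflexive E) (hacyc : Acyclic E)
    (huni : Unidirectional E Xs Ys)
    (Xi Xj : V) (hXi : Xi ∈ Xs) (hXj : Xj ∈ Xs) (hne : Xi ≠ Xj)
    (S : Set V) (hS : S ⊆ Xs \ {Xi, Xj})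
    (hsep : DSep E S Xi Xj) (hnsep : ¬ DSep E (S ∪ Ys) Xi Xj) :
    0 < edgeDens (EdgeCond E Xs Ys) Xs - edgeDens (EdgePlain E Xs) Xs := by
  have hsub : EdgePlain E Xs ⊆ EdgeCond E Xs Ys := by
    rintro e ⟨i, j, rfl, hi, hj, hij, h⟩
    exact ⟨i, j, rfl, hi, hj, hij, fun S _ =>
      not_dsep_of_adj hij (adj_of_edgePlain hcover hacyc huni hi hj h) _⟩
  have hex : ∃ p, IsPath E p Xi Xj ∧ ¬ Blocked E (S ∪ Ys) p := by
    unfold DSep at hnsep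
    push Not at hnsep
    exact hnsep
  obtain ⟨p, hp, hpo⟩ := hex
  obtain ⟨u, v, w, y, hu, hw, huw, h1, h2, hy, hyY, hnadj⟩ :=
    exists_vstruct hcover hacyc hXi hXj hsep _ p rfl hp hpo
  have hmem : s(u, w) ∈ EdgeCond E Xs Ys := by
    refine ⟨u, w, rfl, hu, hw, huw, fun S' _ => ?_⟩
    refine not_dsep_of_vstruct huw ?_ ?_ h1 h2 hy (.inr hyY)
    · rintro rfl; exact hirr _ h1
    · rintro rfl; exact hirr _ h2
  have hnmem : s(u, w) ∉ EdgePlain E Xs := by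
    rintro ⟨i, j, he, hi, hj, hij, h⟩
    have hadj := adj_of_edgePlain hcover hacyc huni hi hj h
    rcases Sym2.eq_iff.1 he with ⟨rfl, rfl⟩ | ⟨rfl, rfl⟩
    · exact hnadj hadj
    · exact hnadj hadj.symm
  have hss : EdgePlain E Xs ⊂ EdgeCond E Xs Ys :=
    ⟨hsub, fun h => hnmem (h hmem)⟩
  have hcard : (EdgePlain E Xs).ncard < (EdgeCond E Xs Ys).ncard :=
    Set.ncard_lt_ncard hss (Set.toFinite _)
  have hX2 : 1 < Xs.ncard :=
    (Set.one_lt_ncard (Set.toFinite _)).2 ⟨Xi, hXi, Xj, hXj, hne⟩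
  have hX2' : (1 : ℝ) < Xs.ncard := by exact_mod_cast hX2
  have hcard' : ((EdgePlain E Xs).ncard : ℝ) < (EdgeCond E Xs Ys).ncard := by exact_mod_cast hcard
  unfold edgeDens
  rw [sub_pos]
  exact div_lt_div_of_pos_right hcard' (by nlinarith)

end VecCI
end

section
/- (Theorem 2, part for Condition (C2).) Let G be a directed acyclic graph on V = 𝐗 ∪ 𝐘, unidirectional from 𝐗 to 𝐘, and assume the graphical form of Condition (C2): there exist distinct Yk, Yl ∈ 𝐘 and S ⊆ 𝐘 \ {Yk, Yl} such that S does not d-separate Yk and Yl in G but S ∪ 𝐗 d-separates Yk and Yl in G. Then d(𝐘|𝐗) := edgeDens(G_{𝐘|𝐗}) − edgeDens(G_𝐘) < 0. -/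
open MeasureTheory ProbabilityTheory

namespace VecCI

variable {V : Type*}

section Helpers

variable {V : Type*}

/-- Ancestors of the set `B`. -/
def An (E : V → V → Prop) (B : Set V) : Set V := {v | ∃ b ∈ B, Descendant E v b}

/-- Moral adjacency inside `A`. -/
def Mor (E : V → V → Prop) (A : Set V) (u w : V) : Prop :=
  E u w ∨ E w u ∨ ∃ c ∈ A, E u c ∧ E w c

/-- One step in the moral graph on `A`, arriving outside `S`. -/
def MStep (E : V → V → Prop) (A S : Set V) (u w : V) : Prop :=
  u ∈ A ∧ w ∈ A ∧ w ∉ S ∧ Mor E A u w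

/-- Connection in the moral graph on `A` avoiding `S`. -/
def Conn (E : V → V → Prop) (A S : Set V) : V → V → Prop :=
  Relation.ReflTransGen (MStep E A S)

/-- Left-going capability at a vertex. -/
def CapL (E : V → V → Prop) (S : Set V) (v : V) (d : Bool) : Prop :=
  (d = true → v ∈ An E S) ∧ (d = false → v ∉ S)

/-- Active walks from `b`, with the direction of arrival. -/
inductive Reach (E : V → V → Prop) (S : Set V) (b : V) : V → Bool → Prop
  | start : Reach E S b b false
  | right {v w d} : Reach E S b v d → v ∉ S → E v w → Reach E S b w true
  | left {v w d} : Reach E S b v d → CapL E S v d → E w v → Reach E S b w false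

/-- Active paths from `b`, with the direction of arrival. -/
inductive SP (E : V → V → Prop) (S : Set V) (b : V) : V → List V → Bool → Prop
  | start : SP E S b b [] false
  | right {v w p d} : SP E S b v p d → v ∉ S → E v w → w ∉ v :: p → SP E S b w (v :: p) true
  | left {v w p d} : SP E S b v p d → CapL E S v d → E w v → w ∉ v :: p →
      SP E S b w (v :: p) false

variable {E : V → V → Prop}

lemma An.sub (B : Set V) : B ⊆ An E B := fun v hv => ⟨v, hv, Relation.ReflTransGen.refl⟩

lemma An.mono {B C : Set V} (h : B ⊆ C) : An E B ⊆ An E C :=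
  fun _ ⟨b, hb, hd⟩ => ⟨b, h hb, hd⟩

lemma An.closed {B : Set V} {u v : V} (h : E u v) (hv : v ∈ An E B) : u ∈ An E B := by
  obtain ⟨b, hb, hd⟩ := hv
  exact ⟨b, hb, Relation.ReflTransGen.head h hd⟩

lemma An.dclosed {B : Set V} {u v : V} (h : Descendant E u v) (hv : v ∈ An E B) :
    u ∈ An E B := by
  obtain ⟨b, hb, hd⟩ := hv
  exact ⟨b, hb, Relation.ReflTransGen.trans h hd⟩

lemma An.le {B C : Set V} (h : B ⊆ An E C) : An E B ⊆ An E C := by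
  rintro v ⟨b, hb, hd⟩
  exact An.dclosed hd (h hb)

lemma Mor.symm {A : Set V} {u w : V} (h : Mor E A u w) : Mor E A w u := by
  rcases h with h | h | ⟨c, hc, h1, h2⟩
  · exact Or.inr (Or.inl h)
  · exact Or.inl h
  · exact Or.inr (Or.inr ⟨c, hc, h2, h1⟩)

lemma Mor.mono {A A' : Set V} (hA : A ⊆ A') {u w : V} (h : Mor E A u w) : Mor E A' u w := by
  rcases h with h | h | ⟨c, hc, h1, h2⟩
  · exact Or.inl h
  · exact Or.inr (Or.inl h)
  · exact Or.inr (Or.inr ⟨c, hA hc, h1, h2⟩)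

lemma Conn.mono {A A' S S' : Set V} (hA : A ⊆ A') (hS : S' ⊆ S) {u w : V}
    (h : Conn E A S u w) : Conn E A' S' u w := by
  induction h with
  | refl => exact Relation.ReflTransGen.refl
  | tail _ h ih =>
    obtain ⟨h1, h2, h3, h4⟩ := h
    exact Relation.ReflTransGen.tail ih ⟨hA h1, hA h2, fun h => h3 (hS h), h4.mono hA⟩

lemma Conn.mem {A S : Set V} {u w : V} (h : Conn E A S u w) (hu : u ∈ A) : w ∈ A := by
  rcases Relation.ReflTransGen.cases_tail h with rfl | ⟨c, _, h⟩
  · exact hu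
  · exact h.2.1

lemma Conn.nmem {A S : Set V} {u w : V} (h : Conn E A S u w) (hu : u ∉ S) : w ∉ S := by
  rcases Relation.ReflTransGen.cases_tail h with rfl | ⟨c, _, h⟩
  · exact hu
  · exact h.2.2.1

lemma Conn.symm {A S : Set V} {u w : V} (h : Conn E A S u w) (hu : u ∉ S) :
    Conn E A S w u := by
  induction h with
  | refl => exact Relation.ReflTransGen.refl
  | tail h1 h2 ih =>
    exact Relation.ReflTransGen.head ⟨h2.2.1, h2.1, Conn.nmem h1 hu, h2.2.2.2.symm⟩ ih

/-! ### Paths to walks -/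

lemma collider_cons {p : List V} {w : V} {i : ℕ} (hi : 0 < i) :
    ColliderAt E (w :: p) (i + 1) ↔ ColliderAt E p i := by
  obtain ⟨j, rfl⟩ : ∃ j, i = j + 1 := ⟨i - 1, by omega⟩
  simp [ColliderAt, Interior]

lemma interior_cons {p : List V} {w : V} {i : ℕ} (hi : 0 < i) :
    Interior (w :: p) (i + 1) ↔ Interior p i := by
  simp [Interior, hi]

lemma blocked_cons {S : Set V} {p : List V} {w : V} (h : Blocked E S p) :
    Blocked E S (w :: p) := by
  rcases h with ⟨i, v, h, h1, h2⟩ | ⟨i, v, h, h1, h2⟩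
  · refine Or.inl ⟨i + 1, v, ⟨(interior_cons h.1.1).2 h.1, ?_⟩, by simpa using h1, h2⟩
    rw [collider_cons h.1.1]
    exact h.2
  · exact Or.inr ⟨i + 1, v, (collider_cons h.1.1).2 h, by simpa using h1, h2⟩

lemma collider_one {p : List V} {w v u : V} :
    ColliderAt E (w :: v :: u :: p) 1 ↔ E w v ∧ E u v := by
  simp [ColliderAt, Interior]

lemma noncollider_one {p : List V} {w v u : V} :
    NonColliderAt E (w :: v :: u :: p) 1 ↔ ¬ (E w v ∧ E u v) := by
  rw [NonColliderAt, collider_one]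
  simp [Interior]

lemma asymm_of_acyclic (hac : Acyclic E) {u v : V} (h : E u v) : ¬ E v u := fun h' =>
  hac u (Relation.TransGen.tail (Relation.TransGen.single h) h')

lemma path_reach (hac : Acyclic E) {S : Set V} {b : V} (hb : b ∉ S) (p : List V) :
    ∀ a, (a :: p).getLast? = some b → (a :: p).IsChain (Adj E) → ¬ Blocked E S (a :: p) →
      ∃ d, Reach E S b a d ∧ (d = true → ∃ u q, p = u :: q ∧ E u a) ∧
        (d = false → ∀ u q, p = u :: q → E a u) := by
  induction p with
  | nil =>
    intro a h1 _ _
    simp at h1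
    subst h1
    exact ⟨false, Reach.start, by simp, by simp⟩
  | cons v q ih =>
    intro w h1 h2 h3
    rw [List.isChain_cons_cons] at h2
    obtain ⟨d, hd, hd1, hd2⟩ := ih v (by simpa using h1) h2.2 (fun h => h3 (blocked_cons h))
    have key : ∀ (_ : d = false ∨ E v w), v ∉ S := by
      intro hh
      rcases q with _ | ⟨u, q⟩
      · simp at h1
        subst h1; exact hb
      · intro hv
        apply h3
        refine Or.inl ⟨1, v, ?_, by simp, hv⟩
        rw [noncollider_one]
        rintro ⟨h4, h5⟩
        rcases hh with hh | hh
        · exact asymm_of_acyclic hac h5 (hd2 hh u q rfl)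
        · exact asymm_of_acyclic hac hh h4
    rcases h2.1 with h | h
    · refine ⟨false, Reach.left hd ⟨?_, fun h => key (Or.inl h)⟩ h, by simp, ?_⟩
      · intro hdt
        obtain ⟨u, q', rfl, hu⟩ := hd1 hdt
        by_contra hv
        apply h3
        refine Or.inr ⟨1, v, collider_one.2 ⟨h, hu⟩, by simp, ?_⟩
        intro e he heS
        exact hv ⟨e, heS, he⟩
      · intro _ u q' hq
        simp at hq
        rw [← hq.1]; exact h
    · exact ⟨true, Reach.right hd (key (Or.inr h)) h, fun _ => ⟨v, q, rfl, h⟩, by simp⟩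

lemma reach_false_mem {S : Set V} {b v : V} {d : Bool} (h : Reach E S b v d) :
    d = false → v ∈ An E (insert b S) := by
  induction h with
  | start => intro _; exact An.sub _ (by simp)
  | right => simp
  | @left v w d h1 h2 h3 ih =>
    intro _
    refine An.closed h3 ?_
    cases d with
    | true => exact An.mono (by simp) (h2.1 rfl)
    | false => exact ih rfl

lemma reach_conn {S A : Set V} {b v : V} {d : Bool} (hA : ∀ u w, E u w → w ∈ A → u ∈ A)
    (hSA : An E (insert b S) ⊆ A) (h : Reach E S b v d) : v ∈ A →
      (d = false → v ∉ S → Conn E A S b v) ∧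
      (d = true → ∃ u, u ∉ S ∧ E u v ∧ Conn E A S b u) := by
  induction h with
  | start => intro _; exact ⟨fun _ _ => Relation.ReflTransGen.refl, by simp⟩
  | @right v w d h1 h2 h3 ih =>
    intro hw
    have hv := hA _ _ h3 hw
    refine ⟨by simp, fun _ => ⟨v, h2, h3, ?_⟩⟩
    cases d with
    | false => exact (ih hv).1 rfl h2
    | true =>
      obtain ⟨u, hu1, hu2, hu3⟩ := (ih hv).2 rfl
      exact Relation.ReflTransGen.tail hu3 ⟨hA _ _ hu2 hv, hv, h2, Or.inl hu2⟩
  | @left v w d h1 h2 h3 ih =>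
    intro hw
    refine ⟨fun _ hwS => ?_, by simp⟩
    cases d with
    | false =>
      have hv := hSA (reach_false_mem h1 rfl)
      exact Relation.ReflTransGen.tail ((ih hv).1 rfl (h2.2 rfl)) ⟨hv, hw, hwS, Or.inr (Or.inl h3)⟩
    | true =>
      have hv : v ∈ A := hSA (An.mono (by simp) (h2.1 rfl))
      obtain ⟨u, hu1, hu2, hu3⟩ := (ih hv).2 rfl
      exact Relation.ReflTransGen.tail hu3
        ⟨hA _ _ hu2 hv, hw, hwS, Or.inr (Or.inr ⟨v, hv, hu2, h3⟩)⟩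

/-- A non-separated pair is connected in the moral ancestral graph. -/
lemma conn_of_not_dsep (hac : Acyclic E) {S : Set V} {a b : V} (ha : a ∉ S) (hb : b ∉ S)
    (h : ¬ DSep E S a b) : Conn E (An E ({a, b} ∪ S)) S b a := by
  unfold DSep at h
  push Not at h
  obtain ⟨p, ⟨_, hp2, hp3, hp4, hp5⟩, hp6⟩ := h
  rcases p with _ | ⟨a', p⟩
  · simp at hp3
  simp at hp3
  subst hp3
  obtain ⟨d, hd, _⟩ := path_reach hac hb p a' hp4 hp5 hp6
  have haA : a' ∈ An E ({a', b} ∪ S) := An.sub _ (by simp)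
  have hsub : insert b S ⊆ {a', b} ∪ S := by
    intro x hx
    simp at hx ⊢
    tauto
  have := reach_conn (A := An E ({a', b} ∪ S)) (fun u w h hw => An.closed h hw)
    (An.mono hsub) hd haA
  cases d with
  | false => exact this.1 rfl ha
  | true =>
    obtain ⟨u, hu1, hu2, hu3⟩ := this.2 rfl
    exact Relation.ReflTransGen.tail hu3 ⟨An.closed hu2 haA, haA, ha, Or.inl hu2⟩

/-! ### Walks to paths -/

lemma sp_suffix {S : Set V} {b v : V} {p : List V} {d : Bool} (h : SP E S b v p d) :
    ∀ w ∈ p, ∃ q d', SP E S b w q d' ∧ (d' = false → w ∉ S) ∧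
      (d' = true → w ∈ An E S ∨ (Descendant E w v ∧ d = true)) := by
  induction h with
  | start => simp
  | @right v x p d h1 h2 h3 h4 ih =>
    intro w hw
    rcases List.mem_cons.1 hw with rfl | hw
    · exact ⟨p, d, h1, fun _ => h2, fun _ => Or.inr ⟨Relation.ReflTransGen.single h3, rfl⟩⟩
    · obtain ⟨q, d', hq, hq1, hq2⟩ := ih w hw
      refine ⟨q, d', hq, hq1, fun hd => ?_⟩
      rcases hq2 hd with h | h
      · exact Or.inl h
      · exact Or.inr ⟨Relation.ReflTransGen.tail h.1 h3, rfl⟩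
  | @left v x p d h1 h2 h3 h4 ih =>
    intro w hw
    rcases List.mem_cons.1 hw with rfl | hw
    · exact ⟨p, d, h1, h2.2, fun hd => Or.inl (h2.1 hd)⟩
    · obtain ⟨q, d', hq, hq1, hq2⟩ := ih w hw
      refine ⟨q, d', hq, hq1, fun hd => Or.inl ?_⟩
      rcases hq2 hd with h | h
      · exact h
      · exact An.dclosed h.1 (h2.1 h.2)

lemma reach_sp {S : Set V} {b v : V} (hac : Acyclic E) {d : Bool} (h : Reach E S b v d) :
    ∃ p d', SP E S b v p d' ∧ (CapL E S v d → CapL E S v d') := by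
  induction h with
  | start => exact ⟨[], false, SP.start, id⟩
  | @right v w d h1 h2 h3 ih =>
    obtain ⟨p, d', hp, hc⟩ := ih
    by_cases hw : w ∈ v :: p
    · have hwp : w ∈ p := by
        rcases List.mem_cons.1 hw with rfl | h
        · exact absurd (Relation.TransGen.single h3) (hac _)
        · exact h
      obtain ⟨q, d'', hq, hq1, hq2⟩ := sp_suffix hp w hwp
      exact ⟨q, d'', hq, fun hcap => ⟨fun _ => hcap.1 rfl, hq1⟩⟩
    · exact ⟨_, _, SP.right hp h2 h3 hw, id⟩
  | @left v w d h1 h2 h3 ih =>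
    obtain ⟨p, d', hp, hc⟩ := ih
    by_cases hw : w ∈ v :: p
    · have hwp : w ∈ p := by
        rcases List.mem_cons.1 hw with rfl | h
        · exact absurd (Relation.TransGen.single h3) (hac _)
        · exact h
      obtain ⟨q, d'', hq, hq1, hq2⟩ := sp_suffix hp w hwp
      refine ⟨q, d'', hq, fun hcap => ⟨fun hd => ?_, hq1⟩⟩
      rcases hq2 hd with h | h
      · exact h
      · exact An.closed h3 ((hc h2).1 h.2)
    · exact ⟨_, _, SP.left hp (hc h2) h3 hw, id⟩

lemma not_blocked_cons {S : Set V} {p : List V} {w v u : V}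
    (h : ¬ Blocked E S (v :: u :: p)) (h1 : ¬ (E w v ∧ E u v) → v ∉ S)
    (h2 : E w v ∧ E u v → v ∈ An E S) : ¬ Blocked E S (w :: v :: u :: p) := by
  rintro (⟨i, x, hi, hx, hxS⟩ | ⟨i, x, hi, hx, hxS⟩)
  · obtain ⟨j, rfl⟩ : ∃ j, i = j + 1 := ⟨i - 1, by have := hi.1.1; omega⟩
    rcases Nat.eq_zero_or_pos j with rfl | hj
    · simp at hx
      subst hx
      exact h1 (noncollider_one.1 hi) hxS
    · refine h (Or.inl ⟨j, x, ⟨(interior_cons hj).1 hi.1, fun hc => hi.2 ?_⟩, by simpa using hx, hxS⟩)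
      exact (collider_cons hj).2 hc
  · obtain ⟨j, rfl⟩ : ∃ j, i = j + 1 := ⟨i - 1, by have := hi.1.1; omega⟩
    rcases Nat.eq_zero_or_pos j with rfl | hj
    · simp at hx
      subst hx
      obtain ⟨e, he, hd⟩ := h2 (collider_one.1 hi)
      exact hxS e hd he
    · exact h (Or.inr ⟨j, x, (collider_cons hj).1 hi, by simpa using hx, hxS⟩)

lemma not_blocked_short {S : Set V} {p : List V} (hp : p.length ≤ 2) : ¬ Blocked E S p := by
  rintro (⟨i, x, hi, -⟩ | ⟨i, x, hi, -⟩)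
  · have := hi.1.1; have := hi.1.2; omega
  · have := hi.1.1; have := hi.1.2; omega

lemma sp_path {S : Set V} {b v : V} (hac : Acyclic E) {p : List V} {d : Bool}
    (h : SP E S b v p d) :
    (v :: p).Nodup ∧ (v :: p).getLast? = some b ∧ (v :: p).IsChain (Adj E) ∧
      ¬ Blocked E S (v :: p) ∧ (∀ u q, p = u :: q → (d = true → E u v) ∧ (d = false → E v u)) := by
  induction h with
  | start => exact ⟨by simp, by simp, by simp, not_blocked_short (by simp), by simp⟩
  | @right v w p d h1 h2 h3 h4 ih =>
    obtain ⟨i1, i2, i3, i4, i5⟩ := ih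
    refine ⟨List.nodup_cons.2 ⟨h4, i1⟩, by simpa using i2,
      List.isChain_cons_cons.2 ⟨Or.inr h3, i3⟩, ?_, ?_⟩
    · rcases p with _ | ⟨u, p⟩
      · exact not_blocked_short (by simp)
      · exact not_blocked_cons i4 (fun _ => h2)
          (fun h => absurd h.1 (asymm_of_acyclic hac h3))
    · intro u q hq
      simp at hq
      rw [← hq.1]
      exact ⟨fun _ => h3, by simp⟩
  | @left v w p d h1 h2 h3 h4 ih =>
    obtain ⟨i1, i2, i3, i4, i5⟩ := ih
    refine ⟨List.nodup_cons.2 ⟨h4, i1⟩, by simpa using i2,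
      List.isChain_cons_cons.2 ⟨Or.inl h3, i3⟩, ?_, ?_⟩
    · rcases p with _ | ⟨u, p⟩
      · exact not_blocked_short (by simp)
      · have := i5 u p rfl
        cases d with
        | true =>
          exact not_blocked_cons i4 (fun h => absurd ⟨h3, this.1 rfl⟩ h) (fun _ => h2.1 rfl)
        | false =>
          exact not_blocked_cons i4 (fun h => h2.2 rfl)
            (fun h => absurd h.2 (asymm_of_acyclic hac (this.2 rfl)))
    · intro u q hq
      simp at hq
      rw [← hq.1]
      exact ⟨by simp, fun _ => h3⟩

lemma not_dsep_of_reach (hac : Acyclic E) {S : Set V} {a b : V} (hab : a ≠ b) {d : Bool}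
    (h : Reach E S b a d) : ¬ DSep E S a b := by
  obtain ⟨p, d', hp, -⟩ := reach_sp hac h
  obtain ⟨h1, h2, h3, h4, -⟩ := sp_path hac hp
  intro hs
  refine h4 (hs _ ⟨h1, ?_, by simp, h2, h3⟩)
  rcases p with _ | ⟨u, p⟩
  · simp at h2; exact absurd h2 hab
  · simp

/-- go down a directed path avoiding `S`. -/
lemma reach_down {S : Set V} {b v a : V} (hd : Descendant E v a) :
    v ∉ An E S → ∀ d, Reach E S b v d → ∃ d', Reach E S b a d' := by
  induction hd using Relation.ReflTransGen.head_induction_on with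
  | refl => exact fun _ d h => ⟨d, h⟩
  | @head v w h1 h2 ih =>
    intro hv d h
    by_cases hw : w ∈ An E S
    · exact absurd (An.closed h1 hw) hv
    · exact ih hw true (Reach.right h (fun h => hv (An.sub _ h)) h1)

/-- go up a directed path avoiding `S`. -/
lemma reach_up {S : Set V} {b v : V} (hd : Descendant E v b) :
    v ∉ An E S → Reach E S b v false := by
  induction hd using Relation.ReflTransGen.head_induction_on with
  | refl => exact fun _ => Reach.start
  | @head v w h1 h2 ih =>
    intro hv
    have hw : w ∉ An E S := fun hw => hv (An.closed h1 hw)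
    exact Reach.left (ih hw) ⟨by simp, fun _ h => hw (An.sub _ h)⟩ h1

lemma reach_of_conn {S : Set V} {a b w : V} (hb : b ∉ S)
    (h : Conn E (An E ({a, b} ∪ S)) S b w) :
    (∃ d, Reach E S b a d) ∨ (w ∉ S ∧ ∃ d, Reach E S b w d ∧ CapL E S w d) := by
  have full : ∀ w d, w ∈ An E ({a, b} ∪ S) → w ∉ S → Reach E S b w d →
      (∃ d, Reach E S b a d) ∨ (w ∉ S ∧ ∃ d, Reach E S b w d ∧ CapL E S w d) := by
    intro w d hwA hw hr
    by_cases hwS : w ∈ An E S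
    · exact Or.inr ⟨hw, d, hr, fun _ => hwS, fun _ => hw⟩
    · obtain ⟨e, he, hde⟩ := hwA
      rcases he with (rfl | he) | he
      · exact Or.inl (reach_down hde hwS d hr)
      · have he' : e = b := he
        subst he'
        exact Or.inr ⟨hw, false, reach_up hde hwS, by simp, fun _ => hw⟩
      · exact absurd ⟨e, he, hde⟩ hwS
  induction h with
  | refl => exact Or.inr ⟨hb, false, Reach.start, by simp, fun _ => hb⟩
  | @tail u w h1 h2 ih =>
    rcases ih with h | ⟨hu, d, hr, hc⟩
    · exact Or.inl h
    obtain ⟨huA, hwA, hwS, h | h | ⟨c, hcA, h, h'⟩⟩ := h2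
    · exact full w true hwA hwS (Reach.right hr hu h)
    · exact full w false hwA hwS (Reach.left hr hc h)
    · have hrc : Reach E S b c true := Reach.right hr hu h
      by_cases hcS : c ∈ An E S
      · exact full w false hwA hwS (Reach.left hrc ⟨fun _ => hcS, by simp⟩ h')
      · obtain ⟨e, he, hde⟩ := hcA
        rcases he with (rfl | he) | he
        · exact Or.inl (reach_down hde hcS true hrc)
        · have he' : e = b := he
          subst he'
          exact full w false hwA hwS (Reach.left (reach_up hde hcS)
            ⟨by simp, fun _ h => hcS (An.sub _ h)⟩ h')
        · exact absurd ⟨e, he, hde⟩ hcS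

lemma not_dsep_of_conn (hac : Acyclic E) {S : Set V} {a b : V} (hab : a ≠ b) (hb : b ∉ S)
    (h : Conn E (An E ({a, b} ∪ S)) S b a) : ¬ DSep E S a b := by
  rcases reach_of_conn hb h with ⟨d, h⟩ | ⟨_, d, h, _⟩
  · exact not_dsep_of_reach hac hab h
  · exact not_dsep_of_reach hac hab h

/-! ### The combinatorial core -/

/-- Connection of `u` and `v` through latent vertices within the ancestors of `B`. -/
def XC (E : V → V → Prop) (Ys B : Set V) (u v : V) : Prop :=
  Conn E (An E B) (Ys \ {u, v}) u v

lemma XC.symm {Ys B : Set V} {u v : V} (h : XC E Ys B u v) : XC E Ys B v u := by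
  have := Conn.symm h (by simp)
  unfold XC
  rwa [Set.pair_comm]

lemma XC.mono {Ys B C : Set V} (hBC : B ⊆ An E C) {u v : V} (h : XC E Ys B u v) :
    XC E Ys C u v := Conn.mono (An.le hBC) subset_rfl h

/-- `B` is ancestral within `Ys`. -/
def AncIn (E : V → V → Prop) (Ys B : Set V) : Prop :=
  B ⊆ Ys ∧ ∀ y ∈ Ys, y ∈ An E B → y ∈ B

lemma descend {Ys B A₀ : Set V} {m v : V}
    (hB : AncIn E Ys B) (hA₀ : A₀ = An E (B \ {m, v})) {c b : V} (hb : b ∈ B)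
    (hd : Descendant E c b) : c ∉ A₀ →
    ∃ g, (g = m ∨ g = v) ∧ Descendant E c g ∧
      ∀ C S' : Set V, g ∈ An E C → S' ⊆ Ys \ {g} → ∀ z, E z c → Conn E (An E C) S' z g := by
  have base : ∀ c, c ∈ Ys → c ∈ B → c ∉ A₀ → ∃ g, (g = m ∨ g = v) ∧ Descendant E c g ∧
      ∀ C S' : Set V, g ∈ An E C → S' ⊆ Ys \ {g} → ∀ z, E z c → Conn E (An E C) S' z g := by
    intro c hcY hcB hc
    refine ⟨c, ?_, Relation.ReflTransGen.refl, ?_⟩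
    · by_contra hne
      apply hc
      rw [hA₀]
      exact An.sub _ ⟨hcB, by simpa using hne⟩
    · intro C S' hg hS' z hz
      exact Relation.ReflTransGen.single
        ⟨An.closed hz hg, hg, fun h => (hS' h).2 rfl, Or.inl hz⟩
  induction hd using Relation.ReflTransGen.head_induction_on with
  | refl => exact base b (hB.1 hb) hb
  | @head c c' h1 h2 ih =>
    intro hc
    by_cases hcY : c ∈ Ys
    · exact base c hcY (hB.2 c hcY ⟨b, hb, Relation.ReflTransGen.head h1 h2⟩) hc
    · obtain ⟨g, hg, hdg, hgc⟩ := ih (fun h => hc (by rw [hA₀] at h ⊢; exact An.closed h1 h))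
      have hdc : Descendant E c g := Relation.ReflTransGen.head h1 hdg
      refine ⟨g, hg, hdc, fun C S' hgC hS' z hz => ?_⟩
      have hcC : c ∈ An E C := An.dclosed hdc hgC
      exact Relation.ReflTransGen.head
        ⟨An.closed hz hcC, hcC, fun h => hcY (hS' h).1, Or.inl hz⟩ (hgC |> fun h => hgc C S' h hS' c h1)

lemma first_hit {Ys B : Set V} {u v m : V} (hB : AncIn E Ys B)
    (hu : u ∈ B) (hv : v ∈ B) (hm : m ∈ B) (huv : u ≠ v) (hum : u ≠ m) (hvm : v ≠ m)
    (h : XC E Ys B u v) : XC E Ys (B \ {m}) u v ∨ XC E Ys (B \ {v}) u m := by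
  set A₀ := An E (B \ {m, v}) with hA₀
  have hAm : A₀ ⊆ An E (B \ {m}) := An.mono (fun x hx => ⟨hx.1, fun h => hx.2 (Or.inl h)⟩)
  have hAv : A₀ ⊆ An E (B \ {v}) := An.mono (fun x hx => ⟨hx.1, fun h => hx.2 (Or.inr h)⟩)
  have hvA : v ∈ An E (B \ {m}) := An.sub _ ⟨hv, by simpa using hvm⟩
  have hmA : m ∈ An E (B \ {v}) := An.sub _ ⟨hm, by simpa using hvm.symm⟩
  have huA : u ∈ A₀ := An.sub _ ⟨hu, by simp [huv, hum]⟩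
  have huY := hB.1 hu
  have toM : ∀ z, Conn E A₀ (Ys \ {u}) u z → Conn E (An E (B \ {m})) (Ys \ {u, v}) u z :=
    fun z hz => Conn.mono hAm (Set.diff_subset_diff_right (by simp)) hz
  have toV : ∀ z, Conn E A₀ (Ys \ {u}) u z → Conn E (An E (B \ {v})) (Ys \ {u, m}) u z :=
    fun z hz => Conn.mono hAv (Set.diff_subset_diff_right (by simp)) hz
  have T : ∀ z c, Conn E A₀ (Ys \ {u}) u z → E z c → c ∈ An E B → c ∉ A₀ →
      XC E Ys (B \ {m}) u v ∨ XC E Ys (B \ {v}) u m := by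
    intro z c hz hzc hcB hc
    obtain ⟨b, hb, hd⟩ := hcB
    obtain ⟨g, hg, -, hgc⟩ := descend hB hA₀ hb hd hc
    rcases hg with rfl | rfl
    · right
      exact Relation.ReflTransGen.trans (toV z hz)
        (hgc _ _ hmA (fun x hx => ⟨hx.1, fun h => hx.2 (Or.inr h)⟩) z hzc)
    · left
      exact Relation.ReflTransGen.trans (toM z hz)
        (hgc _ _ hvA (fun x hx => ⟨hx.1, fun h => hx.2 (Or.inr h)⟩) z hzc)
  have main : ∀ z, Conn E (An E B) (Ys \ {u, v}) u z →
      (XC E Ys (B \ {m}) u v ∨ XC E Ys (B \ {v}) u m) ∨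
      ((z = u ∨ z ∉ Ys) ∧ Conn E A₀ (Ys \ {u}) u z) := by
    intro z hz
    induction hz with
    | refl => exact Or.inr ⟨Or.inl rfl, Relation.ReflTransGen.refl⟩
    | @tail z w h1 h2 ih =>
      rcases ih with h | ⟨hz, hcz⟩
      · exact Or.inl h
      have hzA : z ∈ A₀ := Conn.mem hcz huA
      obtain ⟨-, hwB, hwS, hmor⟩ := h2
      by_cases hwv : w = v
      · subst hwv
        left
        have fin : Mor E (An E (B \ {m})) z w → XC E Ys (B \ {m}) u w := fun hM =>
          Relation.ReflTransGen.tail (toM z hcz) ⟨hAm hzA, hvA, hwS, hM⟩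
        rcases hmor with h | h | ⟨c, hc, h, h'⟩
        · exact Or.inl (fin (Or.inl h))
        · exact Or.inl (fin (Or.inr (Or.inl h)))
        · by_cases hcA : c ∈ A₀
          · exact Or.inl (fin (Or.inr (Or.inr ⟨c, hAm hcA, h, h'⟩)))
          · exact T z c hcz h hc hcA
      by_cases hwu : w = u
      · exact Or.inr ⟨Or.inl hwu, hwu ▸ Relation.ReflTransGen.refl⟩
      have hwY : w ∉ Ys := fun h => hwS ⟨h, by simp [hwu, hwv]⟩
      have fin : w ∈ A₀ → Mor E A₀ z w → (w = u ∨ w ∉ Ys) ∧ Conn E A₀ (Ys \ {u}) u w :=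
        fun hw hM => ⟨Or.inr hwY, Relation.ReflTransGen.tail hcz ⟨hzA, hw, fun h => hwY h.1, hM⟩⟩
      rcases hmor with h | h | ⟨c, hc, h, h'⟩
      · by_cases hwA : w ∈ A₀
        · exact Or.inr (fin hwA (Or.inl h))
        · exact Or.inl (T z w hcz h hwB hwA)
      · exact Or.inr (fin (An.closed h hzA) (Or.inr (Or.inl h)))
      · by_cases hcA : c ∈ A₀
        · exact Or.inr (fin (An.closed h' hcA) (Or.inr (Or.inr ⟨c, hcA, h, h'⟩)))
        · exact Or.inl (T z c hcz h hc hcA)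
  rcases main v h with h | ⟨h | h, -⟩
  · exact h
  · exact absurd h.symm huv
  · exact absurd (hB.1 hv) h

/-- `m` is a sink of `B`. -/
def Sink (E : V → V → Prop) (B : Set V) (m : V) : Prop := m ∈ B ∧ ∀ c ∈ B, ¬ E m c

lemma ancIn_diff {Xs Ys B : Set V} (hcover : Xs ∪ Ys = Set.univ)
    (huni : Unidirectional E Xs Ys) (hB : AncIn E Ys B) {m : V} (hm : Sink E B m) :
    AncIn E Ys (B \ {m}) := by
  refine ⟨fun x hx => hB.1 hx.1, ?_⟩
  rintro y hy ⟨b, hb, hd⟩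
  refine ⟨hB.2 y hy ⟨b, hb.1, hd⟩, ?_⟩
  intro hym
  have hym : y = m := hym
  subst hym
  rcases Relation.ReflTransGen.cases_head hd with h | ⟨c, h1, h2⟩
  · exact hb.2 h.symm
  · have hc : c ∈ Ys := by
      have : c ∈ Xs ∪ Ys := by rw [hcover]; trivial
      rcases this with h | h
      · exact absurd h1 (huni c h y hy)
      · exact h
    exact hm.2 c (hB.2 c hc ⟨b, hb.1, h2⟩) h1

lemma exists_sink [Finite V] (hac : Acyclic E) {B : Set V} {b : V} (hb : b ∈ B) :
    ∃ m, Descendant E b m ∧ m ∈ B ∧ ∀ c ∈ B, ¬ E m c := by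
  let r : V → V → Prop := fun x y => Relation.TransGen E y x
  haveI : IsTrans V r := ⟨fun x y z h1 h2 => Relation.TransGen.trans h2 h1⟩
  haveI : Std.Irrefl r := ⟨fun x h => hac x h⟩
  have wf : WellFounded r := Finite.wellFounded_of_trans_of_irrefl r
  obtain ⟨m, hm, hmin⟩ := wf.has_min {c | c ∈ B ∧ Descendant E b c}
    ⟨b, hb, Relation.ReflTransGen.refl⟩
  exact ⟨m, hm.2, hm.1, fun c hc h =>
    hmin c ⟨hc, Relation.ReflTransGen.tail hm.2 h⟩ (Relation.TransGen.single h)⟩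

lemma core [Finite V] {Xs Ys : Set V} (hac : Acyclic E) (hcover : Xs ∪ Ys = Set.univ)
    (huni : Unidirectional E Xs Ys)
    (hIP : ∀ u v, u ∈ Ys → v ∈ Ys → u ≠ v → XC E Ys {u, v} u v → E u v ∨ E v u) (n : ℕ) :
    ∀ B : Set V, B.ncard = n → AncIn E Ys B → ∀ u v, u ∈ B → v ∈ B → u ≠ v → XC E Ys B u v →
      E u v ∨ E v u ∨ ∃ c ∈ B, E u c ∧ E v c := by
  induction n using Nat.strong_induction_on with
  | _ n ih =>
  intro B hBn hB
  -- induction hypothesis for removal of a sink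
  have IH : ∀ m, Sink E B m → ∀ u v, u ∈ B → v ∈ B → u ≠ m → v ≠ m → u ≠ v →
      XC E Ys (B \ {m}) u v → E u v ∨ E v u ∨ ∃ c ∈ B, E u c ∧ E v c := by
    intro m hm u v hu hv hum hvm huv h
    have hlt : (B \ {m}).ncard < n := by
      rw [← hBn]; exact Set.ncard_diff_singleton_lt_of_mem hm.1 (Set.toFinite B)
    rcases ih _ hlt (B \ {m}) rfl (ancIn_diff hcover huni hB hm) u v ⟨hu, hum⟩ ⟨hv, hvm⟩ huv h with
      h | h | ⟨c, hc, h⟩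
    · exact Or.inl h
    · exact Or.inr (Or.inl h)
    · exact Or.inr (Or.inr ⟨c, hc.1, h⟩)
  -- either an inducing connection, or a further sink
  have alt : ∀ u v, u ∈ B → v ∈ B → u ≠ v → XC E Ys B u v → (E u v ∨ E v u) ∨
      ∃ m, Sink E B m ∧ u ≠ m ∧ v ≠ m := by
    intro u v hu hv huv h
    by_cases hsub : B ⊆ An E {u, v}
    · exact Or.inl (hIP u v (hB.1 hu) (hB.1 hv) huv (h.mono hsub))
    · obtain ⟨b, hb, hb'⟩ := Set.not_subset.1 hsub
      obtain ⟨m, hd, hm⟩ := exists_sink hac hb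
      refine Or.inr ⟨m, hm, ?_, ?_⟩
      · rintro rfl; exact hb' ⟨u, by simp, hd⟩
      · rintro rfl; exact hb' ⟨v, by simp, hd⟩
  have SS : ∀ m m', Sink E B m → Sink E B m' → m ≠ m' → ¬ XC E Ys B m m' := by
    intro m m' hm hm' hne h
    have nope : ∀ w w', Sink E B w → Sink E B w' →
        ¬ (E w w' ∨ E w' w ∨ ∃ c ∈ B, E w c ∧ E w' c) := by
      rintro w w' hw hw' (h | h | ⟨c, hc, h, -⟩)
      · exact hw.2 _ hw'.1 h
      · exact hw'.2 _ hw.1 h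
      · exact hw.2 _ hc h
    rcases alt m m' hm.1 hm'.1 hne h with h' | ⟨m₂, hm₂, h1, h2⟩
    · exact nope m m' hm hm' (by tauto)
    · rcases first_hit hB hm.1 hm'.1 hm₂.1 hne h1 h2 h with h' | h'
      · exact nope m m' hm hm' (IH m₂ hm₂ m m' hm.1 hm'.1 h1 h2 hne h')
      · exact nope m m₂ hm hm₂ (IH m' hm' m m₂ hm.1 hm₂.1 hne h2.symm h1 h')
  have diffsub : ∀ x : V, B \ {x} ⊆ An E B := fun x => Set.diff_subset.trans (An.sub B)
  have S2 : ∀ u m, u ∈ B → Sink E B m → u ≠ m → XC E Ys B u m → E u m := by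
    intro u m hu hm hne h
    have simpl : (E u m ∨ E m u ∨ ∃ c ∈ B, E u c ∧ E m c) → E u m := by
      rintro (h | h | ⟨c, hc, -, h⟩)
      · exact h
      · exact absurd h (hm.2 u hu)
      · exact absurd h (hm.2 c hc)
    rcases alt u m hu hm.1 hne h with h' | ⟨m', hm', h1, h2⟩
    · exact simpl (by tauto)
    · rcases first_hit hB hm.1 hu hm'.1 hne.symm h2 h1 h.symm with h' | h'
      · exact simpl (IH m' hm' u m hu hm.1 h1 h2 hne h'.symm)
      · exact absurd (h'.mono (diffsub u)) (SS m m' hm hm' h2)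
  intro u v hu hv huv h
  rcases alt u v hu hv huv h with h' | ⟨m, hm, h1, h2⟩
  · tauto
  · rcases first_hit hB hu hv hm.1 huv h1 h2 h with h' | h'
    · exact IH m hm u v hu hv h1 h2 huv h'
    · rcases first_hit hB hv hu hm.1 huv.symm h2 h1 h.symm with h'' | h''
      · exact IH m hm u v hu hv h1 h2 huv h''.symm
      · exact Or.inr (Or.inr ⟨m, hm.1, S2 u m hu hm h1 (h'.mono (diffsub v)),
          S2 v m hv hm h2 (h''.mono (diffsub u))⟩)

/-- Transfer of connections. -/
lemma transfer [Finite V] {Xs Ys : Set V} (hac : Acyclic E) (hcover : Xs ∪ Ys = Set.univ)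
    (hdisj : Disjoint Xs Ys) (huni : Unidirectional E Xs Ys)
    (hIP : ∀ u v, u ∈ Ys → v ∈ Ys → u ≠ v → XC E Ys {u, v} u v → E u v ∨ E v u)
    {D S : Set V} (hD : D ⊆ Ys) {l z : V} (hl : l ∈ D) (hlS : l ∉ S)
    (h : Conn E (An E D) S l z) :
    (z ∈ Ys → Conn E (An E D) (S ∪ Xs) l z) ∧
    (z ∉ Ys → ∃ y ∈ Ys, y ∈ An E D ∧ y ∉ S ∧ Conn E (An E D) (S ∪ Xs) l y ∧
      Conn E (An E D) Ys y z) := by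
  have hcore := core hac hcover huni hIP _ (An E D ∩ Ys) rfl
    ⟨Set.inter_subset_right, fun y hy hyA => ⟨An.le Set.inter_subset_left hyA, hy⟩⟩
  have hDsub : An E D ⊆ An E (An E D ∩ Ys) := An.mono (fun x hx => ⟨An.sub _ hx, hD hx⟩)
  have nX : ∀ y ∈ Ys, y ∉ Xs := fun y hy hx => Set.disjoint_left.1 hdisj hx hy
  induction h with
  | refl => exact ⟨fun _ => Relation.ReflTransGen.refl, fun h => absurd (hD hl) h⟩
  | @tail z w h1 h2 ih =>
    have hzS : z ∉ S := Conn.nmem h1 hlS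
    obtain ⟨hzA, hwA, hwS, hmor⟩ := h2
    -- a Y vertex from which we connect
    have hy : ∃ y ∈ Ys, y ∈ An E D ∧ y ∉ S ∧ Conn E (An E D) (S ∪ Xs) l y ∧
      Conn E (An E D) Ys y z := by
      by_cases hzY : z ∈ Ys
      · exact ⟨z, hzY, hzA, hzS, ih.1 hzY, Relation.ReflTransGen.refl⟩
      · exact ih.2 hzY
    obtain ⟨y, hyY, hyA, hyS, hy1, hy2⟩ := hy
    refine ⟨fun hwY => ?_, fun hwY => ⟨y, hyY, hyA, hyS, hy1,
      Relation.ReflTransGen.tail hy2 ⟨hzA, hwA, hwY, hmor⟩⟩⟩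
    by_cases hyw : y = w
    · exact hyw ▸ hy1
    have hxc : XC E Ys (An E D ∩ Ys) y w :=
      Conn.mono hDsub subset_rfl (Relation.ReflTransGen.tail
        (Conn.mono subset_rfl Set.diff_subset hy2) ⟨hzA, hwA, by simp, hmor⟩)
    refine Relation.ReflTransGen.tail hy1 ⟨hyA, hwA, ?_, ?_⟩
    · rintro (h | h)
      · exact hwS h
      · exact nX w hwY h
    · rcases hcore y w ⟨hyA, hyY⟩ ⟨hwA, hwY⟩ hyw hxc with h | h | ⟨c, hc, h⟩
      · exact Or.inl h
      · exact Or.inr (Or.inl h)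
      · exact Or.inr (Or.inr ⟨c, hc.1, h⟩)

/-- local Markov property -/
lemma localMarkov {Xs Ys : Set V} (hac : Acyclic E) (hcover : Xs ∪ Ys = Set.univ)
    (huni : Unidirectional E Xs Ys) {i j : V} (hj : j ∈ Ys) (hij : i ≠ j)
    (h1 : ¬ E i j) (hd : ¬ Descendant E j i) :
    ¬ Conn E (An E ({i, j} ∪ ({p | p ∈ Ys ∧ E p j} ∪ Xs))) ({p | p ∈ Ys ∧ E p j} ∪ Xs) j i := by
  have XY : ∀ x, x ∈ Xs ∨ x ∈ Ys := fun x => by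
    have : x ∈ Xs ∪ Ys := by rw [hcover]; trivial
    exact this
  have downX : ∀ x y, Descendant E y x → x ∈ Xs → y ∈ Xs := by
    intro x y h hx
    induction h using Relation.ReflTransGen.head_induction_on with
    | refl => exact hx
    | @head a c h1 h2 ih =>
      rcases XY a with h | h
      · exact h
      · exact absurd h1 (huni c ih a h)
  have sink : ∀ c, E j c → c ∉ An E ({i, j} ∪ ({p | p ∈ Ys ∧ E p j} ∪ Xs)) := by
    rintro c hc ⟨b, hb, hdb⟩
    rcases hb with (rfl | hb) | (hb | hb)
    · exact hd (Relation.ReflTransGen.head hc hdb)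
    · have hb : b = j := hb
      subst hb
      exact hac _ (Relation.TransGen.head' hc hdb)
    · exact hac _ (Relation.TransGen.tail (Relation.TransGen.head' hc hdb) hb.2)
    · exact huni c (downX b c hdb hb) j hj hc
  intro h
  rcases Relation.ReflTransGen.cases_head h with h | ⟨w, ⟨-, hwA, hwS, hm⟩, -⟩
  · exact hij h.symm
  · rcases hm with h | h | ⟨c, hc, h, -⟩
    · exact sink w h hwA
    · rcases XY w with h' | h'
      · exact hwS (Or.inr h')
      · exact hwS (Or.inl ⟨h', h⟩)
    · exact sink c h hc

lemma not_dsep_adj {S : Set V} {i j : V} (hij : i ≠ j) (h : E i j ∨ E j i) : ¬ DSep E S i j := by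
  intro hs
  refine not_blocked_short (p := [i, j]) (by simp) (hs [i, j] ⟨by simpa using hij, by simp, by simp, by simp, ?_⟩)
  exact List.isChain_cons_cons.2 ⟨h, by simp⟩

lemma adj_of_cond {Xs Ys : Set V} (hac : Acyclic E) (hcover : Xs ∪ Ys = Set.univ)
    (hdisj : Disjoint Xs Ys) (huni : Unidirectional E Xs Ys) {i j : V} (hi : i ∈ Ys) (hj : j ∈ Ys)
    (hij : i ≠ j) (h : ∀ S : Set V, S ⊆ Ys \ {i, j} → ¬ DSep E (S ∪ Xs) i j) :
    E i j ∨ E j i := by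
  by_contra hn
  push Not at hn
  have irr : ∀ x, ¬ E x x := fun x h => hac x (Relation.TransGen.single h)
  have nX : ∀ y ∈ Ys, y ∉ Xs := fun y hy hx => Set.disjoint_left.1 hdisj hx hy
  by_cases hd : Descendant E j i
  · have hd' : ¬ Descendant E i j := by
      intro hd'
      rcases Relation.ReflTransGen.cases_head hd with h | ⟨c, h1, h2⟩
      · exact hij h.symm
      · exact hac j (Relation.TransGen.head' h1 (Relation.ReflTransGen.trans h2 hd'))
    have := h {p | p ∈ Ys ∧ E p i} (by
      rintro p ⟨hp, hpi⟩
      refine ⟨hp, ?_⟩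
      rintro (rfl | rfl)
      · exact irr _ hpi
      · exact hn.2 hpi)
    have hi' : i ∉ {p | p ∈ Ys ∧ E p i} ∪ Xs := by
      rintro (h | h)
      · exact irr _ h.2
      · exact nX i hi h
    have hj' : j ∉ {p | p ∈ Ys ∧ E p i} ∪ Xs := by
      rintro (h | h)
      · exact hn.2 h.2
      · exact nX j hj h
    have hc := (conn_of_not_dsep hac hi' hj' this).symm hj'
    rw [Set.pair_comm] at hc
    exact localMarkov hac hcover huni hi hij.symm hn.2 hd' hc
  · have := h {p | p ∈ Ys ∧ E p j} (by
      rintro p ⟨hp, hpi⟩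
      refine ⟨hp, ?_⟩
      rintro (rfl | rfl)
      · exact hn.1 hpi
      · exact irr _ hpi)
    have hi' : i ∉ {p | p ∈ Ys ∧ E p j} ∪ Xs := by
      rintro (h | h)
      · exact hn.1 h.2
      · exact nX i hi h
    have hj' : j ∉ {p | p ∈ Ys ∧ E p j} ∪ Xs := by
      rintro (h | h)
      · exact irr _ h.2
      · exact nX j hj h
    exact localMarkov hac hcover huni hj hij hn.1 hd (conn_of_not_dsep hac hi' hj' this)

end Helpers

/-- Theorem 2, part for Condition (C2): under the graphical form of (C2),
`d(Y|X) = edgeDens(G_{Y|X}) − edgeDens(G_Y) < 0`. -/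
theorem stmt_15 {V : Type*} [Fintype V] (E : V → V → Prop) (Xs Ys : Set V)
    (hcover : Xs ∪ Ys = Set.univ) (hdisj : Disjoint Xs Ys)
    (hXne : Xs.Nonempty) (hYne : Ys.Nonempty)
    (hirr : Irreflexive E) (hacyc : Acyclic E)
    (huni : Unidirectional E Xs Ys)
    (Yk Yl : V) (hYk : Yk ∈ Ys) (hYl : Yl ∈ Ys) (hne : Yk ≠ Yl)
    (S : Set V) (hS : S ⊆ Ys \ {Yk, Yl})
    (hnsep : ¬ DSep E S Yk Yl) (hsep : DSep E (S ∪ Xs) Yk Yl) :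
    edgeDens (EdgeCond E Ys Xs) Ys - edgeDens (EdgePlain E Ys) Ys < 0 := by
  have nX : ∀ y ∈ Ys, y ∉ Xs := fun y hy hx => Set.disjoint_left.1 hdisj hx hy
  have hsub : EdgeCond E Ys Xs ⊆ EdgePlain E Ys := by
    rintro e ⟨i, j, rfl, hi, hj, hij, h⟩
    exact ⟨i, j, rfl, hi, hj, hij, fun S _ =>
      not_dsep_adj hij (adj_of_cond hacyc hcover hdisj huni hi hj hij h)⟩
  have hnot : ¬ EdgePlain E Ys ⊆ EdgeCond E Ys Xs := by
    intro hle
    have hIP : ∀ u v, u ∈ Ys → v ∈ Ys → u ≠ v → XC E Ys {u, v} u v → E u v ∨ E v u := by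
      intro u v hu hv huv hxc
      have hmem : s(u, v) ∈ EdgePlain E Ys := by
        refine ⟨u, v, rfl, hu, hv, huv, fun S₀ hS₀ => ?_⟩
        refine not_dsep_of_conn hacyc huv (fun h => (hS₀ h).2 (by simp)) ?_
        exact (Conn.mono (An.mono Set.subset_union_left) hS₀ hxc).symm
          (fun h => (hS₀ h).2 (by simp))
      obtain ⟨i, j, he, hi, hj, hij, h⟩ := hle hmem
      have := adj_of_cond hacyc hcover hdisj huni hi hj hij h
      rcases Sym2.eq_iff.1 he with ⟨rfl, rfl⟩ | ⟨rfl, rfl⟩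
      · exact this
      · exact this.symm
    have hkS : Yk ∉ S := fun h => (hS h).2 (by simp)
    have hlS : Yl ∉ S := fun h => (hS h).2 (by simp)
    have hc := conn_of_not_dsep hacyc hkS hlS hnsep
    have hD : ({Yk, Yl} ∪ S : Set V) ⊆ Ys := by
      rintro x ((rfl | hx) | hx)
      · exact hYk
      · have hx : x = Yl := hx
        exact hx ▸ hYl
      · exact (hS hx).1
    have ht := (transfer hacyc hcover hdisj huni hIP hD (by simp) hlS hc).1 hYk
    refine not_dsep_of_conn hacyc hne ?_ (Conn.mono (An.mono ?_) subset_rfl ht) hsep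
    · rintro (h | h)
      · exact hlS h
      · exact nX Yl hYl h
    · exact Set.union_subset_union_right _ Set.subset_union_left
  have hlt : (EdgeCond E Ys Xs).ncard < (EdgePlain E Ys).ncard :=
    Set.ncard_lt_ncard ⟨hsub, hnot⟩ (Set.toFinite _)
  have hcard : 1 < Ys.ncard := (Set.one_lt_ncard (Set.toFinite Ys)).2 ⟨Yk, hYk, Yl, hYl, hne⟩
  have hcard' : (1 : ℝ) < (Ys.ncard : ℝ) := by exact_mod_cast hcard
  have hpos : 0 < (Ys.ncard : ℝ) * ((Ys.ncard : ℝ) - 1) / 2 := by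
    have : 0 < (Ys.ncard : ℝ) - 1 := by linarith
    positivity
  unfold edgeDens
  rw [sub_neg]
  exact div_lt_div_of_pos_right (by exact_mod_cast hlt) hpos

end VecCI
end
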